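/- arXiv:1802.02023 — 3 statements merged into one kernel-verified Lean document; each statement's English description precedes it below -/
import Mathlib

section
/- For every real q ∈ (0, e^{−π}) one has 0 < z₄(q) < 1 and F₄(1/2, z₄(q)) = F₄(0, z₄(q)) · 8√q · ∑_{n=0}^∞ σ₃(2n+1) (−q)ⁿ / (2n+1)³. -/
open Real

/-- Jacobi theta null value `θ₂(q) = ∑_{n∈ℤ} q^{(n+1/2)²}`. -/
noncomputable def theta2 (q : ℝ) : ℝ := ∑' n : ℤ, q ^ (((n : ℝ) + 1 / 2) ^ 2)

/-- Jacobi theta null value `θ₃(q) = ∑_{n∈ℤ} q^{n²}`. -/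
noncomputable def theta3 (q : ℝ) : ℝ := ∑' n : ℤ, q ^ ((n : ℝ) ^ 2)

/-- Jacobi theta null value `θ₄(q) = ∑_{n∈ℤ} (−1)ⁿ q^{n²}`. -/
noncomputable def theta4 (q : ℝ) : ℝ := ∑' n : ℤ, (-1 : ℝ) ^ n * q ^ ((n : ℝ) ^ 2)

/-- The modular lambda function `λ(q) = θ₂(q)⁴/θ₃(q)⁴`. -/
noncomputable def modLambda (q : ℝ) : ℝ := theta2 q ^ 4 / theta3 q ^ 4

/-- `z₄(q) = 4λ(q)(1−λ(q))`. -/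
noncomputable def z4 (q : ℝ) : ℝ := 4 * modLambda q * (1 - modLambda q)

/-- `F₄(x,z) = ∑_{n=0}^∞ z^{n+x} · ((1/2+x)_n)³/((1+x)_n)³`. -/
noncomputable def F4 (x z : ℝ) : ℝ :=
  ∑' n : ℕ, z ^ ((n : ℝ) + x) *
    ((ascPochhammer ℝ n).eval (1 / 2 + x)) ^ 3 / ((ascPochhammer ℝ n).eval (1 + x)) ^ 3

/-- The differential operator `f ↦ q·f′(q)`. -/
noncomputable def qDeriv (f : ℝ → ℝ) : ℝ → ℝ := fun q => q * deriv f q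

/-- `σ₃(n)`, the sum of the cubes of the positive divisors of `n`. -/
def sigma3 (n : ℕ) : ℕ := ∑ d ∈ n.divisors, d ^ 3


namespace TT

noncomputable def eB (n : ℤ) : ℕ := (n ^ 2).toNat
noncomputable def eA (n : ℤ) : ℕ := (n * (n + 1)).toNat

lemma eB_cast (n : ℤ) : ((eB n : ℕ) : ℤ) = n ^ 2 := Int.toNat_of_nonneg (sq_nonneg n)

lemma eA_cast (n : ℤ) : ((eA n : ℕ) : ℤ) = n * (n + 1) := by
  apply Int.toNat_of_nonneg
  rcases le_or_gt 0 n with h | h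
  · positivity
  · nlinarith

lemma eB_le (n : ℤ) : n.natAbs ≤ eB n + 1 := by
  zify
  rw [eB_cast]
  rcases abs_cases n with ⟨h, h'⟩ | ⟨h, h'⟩ <;> rw [h] <;> nlinarith

lemma eA_le (n : ℤ) : n.natAbs ≤ eA n + 1 := by
  zify
  rw [eA_cast]
  rcases abs_cases n with ⟨h, h'⟩ | ⟨h, h'⟩ <;> rw [h] <;> nlinarith

lemma summable_geom_int {r : ℝ} (h0 : 0 ≤ r) (h1 : r < 1) : Summable (fun n : ℤ => r ^ n.natAbs) := by
  apply Summable.of_nat_of_neg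
  · simpa using summable_geometric_of_lt_one h0 h1
  · simpa using summable_geometric_of_lt_one h0 h1

lemma summable_exp_int {e : ℤ → ℕ} (he : ∀ n, n.natAbs ≤ e n + 1) {r : ℝ} (h0 : 0 ≤ r) (h1 : r < 1) :
    Summable (fun n : ℤ => r ^ e n) := by
  rcases h0.eq_or_lt with rfl | h0
  · have : (Finset.Icc (-1 : ℤ) 1 : Set ℤ).Finite := Finset.finite_toSet _
    apply summable_of_hasFiniteSupport
    apply this.subset
    intro n hn
    have := he n
    simp at hn
    rw [hn] at this
    simp
    omega
  have := (summable_geom_int h0.le h1).mul_left r⁻¹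
  refine this.of_nonneg_of_le (fun n => by positivity) (fun n => ?_)
  rw [inv_mul_eq_div, le_div_iff₀ h0, ← pow_succ]
  exact pow_le_pow_of_le_one h0.le h1.le (he n)

lemma summable_norm_q {e : ℤ → ℕ} (he : ∀ n, n.natAbs ≤ e n + 1) {q : ℂ} (h1 : ‖q‖ < 1) :
    Summable (fun n : ℤ => ‖q ^ e n‖) := by
  simpa using summable_exp_int he (norm_nonneg q) h1

lemma summable_q {e : ℤ → ℕ} (he : ∀ n, n.natAbs ≤ e n + 1) {q : ℂ} (h1 : ‖q‖ < 1) :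
    Summable (fun n : ℤ => q ^ e n) := (summable_norm_q he h1).of_norm

noncomputable def PB (q : ℂ) : ℂ := ∑' n : ℤ, q ^ eB n
noncomputable def PA (q : ℂ) : ℂ := ∑' n : ℤ, q ^ eA n

lemma differentiableOn_q {e : ℤ → ℕ} (he : ∀ n, n.natAbs ≤ e n + 1) :
    DifferentiableOn ℂ (fun q : ℂ => ∑' n : ℤ, q ^ e n) (Metric.ball 0 1) := by
  intro q hq
  simp only [Metric.mem_ball, dist_zero_right] at hq
  obtain ⟨r, h1, h2⟩ := exists_between hq
  have h0 : 0 ≤ r := (norm_nonneg q).trans h1.le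
  have := Complex.differentiableOn_tsum_of_summable_norm (F := fun (n : ℤ) (q : ℂ) => q ^ e n)
    (U := Metric.ball 0 r) (summable_exp_int he h0 h2) (fun i => by fun_prop) Metric.isOpen_ball
    (fun i w hw => by
      simp only [Metric.mem_ball, dist_zero_right] at hw
      rw [norm_pow]
      gcongr)
  exact (this.differentiableAt (Metric.isOpen_ball.mem_nhds (by simpa using h1))).differentiableWithinAt

lemma PB_diff : DifferentiableOn ℂ PB (Metric.ball 0 1) := differentiableOn_q eB_le
lemma PA_diff : DifferentiableOn ℂ PA (Metric.ball 0 1) := differentiableOn_q eA_le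

lemma tsum_split {f : ℤ × ℤ → ℂ} (hf : Summable f) (i j : ℤ × ℤ → ℤ × ℤ)
    (h : Function.Bijective (Sum.elim i j)) : ∑' p, f p = ∑' p, f (i p) + ∑' p, f (j p) := by
  have e := Equiv.ofBijective _ h
  have hi : Function.Injective i := fun a b hab => by
    have := h.1 (a₁ := Sum.inl a) (a₂ := Sum.inl b) hab
    simpa using this
  have hj : Function.Injective j := fun a b hab => by
    have := h.1 (a₁ := Sum.inr a) (a₂ := Sum.inr b) hab
    simpa using this
  rw [← (Equiv.ofBijective _ h).tsum_eq f]
  apply HasSum.tsum_eq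
  apply HasSum.sum
  · exact (hf.comp_injective hi).hasSum
  · exact (hf.comp_injective hj).hasSum

lemma sq_tsum {e e' : ℤ → ℕ} (he : ∀ n, n.natAbs ≤ e n + 1) (he' : ∀ n, n.natAbs ≤ e' n + 1)
    {q : ℂ} (h1 : ‖q‖ < 1) : (∑' n : ℤ, q ^ e n) * (∑' n : ℤ, q ^ e' n) = ∑' p : ℤ × ℤ, q ^ (e p.1 + e' p.2) ∧
     Summable (fun p : ℤ × ℤ => q ^ (e p.1 + e' p.2)) := by
  have a := tsum_mul_tsum_of_summable_norm (summable_norm_q he h1) (summable_norm_q he' h1)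
  have b := summable_mul_of_summable_norm (summable_norm_q he h1) (summable_norm_q he' h1)
  have c : (fun p : ℤ × ℤ => q ^ (e p.1 + e' p.2)) = fun p : ℤ × ℤ => q ^ e p.1 * q ^ e' p.2 := by
    funext p; rw [pow_add]
  rw [c]
  exact ⟨a, b⟩

lemma bij1 : Function.Bijective (Sum.elim (fun p : ℤ × ℤ => (p.1 + p.2, p.1 - p.2))
    (fun p : ℤ × ℤ => (p.1 + p.2 + 1, p.1 - p.2))) := by
  constructor
  · rintro (⟨a, b⟩ | ⟨a, b⟩) (⟨c, d⟩ | ⟨c, d⟩) h <;> simp at h ⊢ <;> omega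
  · rintro ⟨m, n⟩
    rcases Int.even_or_odd' (m + n) with ⟨k, hk | hk⟩
    · exact ⟨Sum.inl (k, m - k), by simp; omega⟩
    · exact ⟨Sum.inr (k, m - k - 1), by simp; omega⟩

lemma bij2 : Function.Bijective (Sum.elim (fun p : ℤ × ℤ => (p.1 + p.2, p.1 - p.2))
    (fun p : ℤ × ℤ => (p.1 + p.2, -1 - (p.1 - p.2)))) := by
  constructor
  · rintro (⟨a, b⟩ | ⟨a, b⟩) (⟨c, d⟩ | ⟨c, d⟩) h <;> simp at h ⊢ <;> omega
  · rintro ⟨m, n⟩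
    rcases Int.even_or_odd' (m + n) with ⟨k, hk | hk⟩
    · exact ⟨Sum.inl (k, m - k), by simp; omega⟩
    · exact ⟨Sum.inr (m - k - 1, k + 1), by simp; omega⟩

lemma norm_sq_lt {q : ℂ} (h1 : ‖q‖ < 1) : ‖q ^ 2‖ < 1 := by
  rw [norm_pow]; exact pow_lt_one₀ (norm_nonneg _) h1 two_ne_zero

lemma PB_sq {q : ℂ} (h1 : ‖q‖ < 1) : PB q ^ 2 = PB (q ^ 2) ^ 2 + q * PA (q ^ 2) ^ 2 := by
  have hq2 := norm_sq_lt h1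
  simp only [sq (PB _), sq (PA _)]
  unfold PB PA
  rw [(sq_tsum eB_le eB_le h1).1, (sq_tsum eB_le eB_le hq2).1, (sq_tsum eA_le eA_le hq2).1,
    tsum_split (sq_tsum eB_le eB_le h1).2 _ _ bij1, ← tsum_mul_left]
  congr 1
  · apply tsum_congr; rintro ⟨x, y⟩
    rw [← pow_mul]; congr 1; zify; simp only [eB_cast]; ring
  · apply tsum_congr; rintro ⟨x, y⟩
    rw [← pow_mul, ← pow_succ']; congr 1; zify; simp only [eB_cast, eA_cast]; ring

lemma PA_sq {q : ℂ} (h1 : ‖q‖ < 1) : PA q ^ 2 = 2 * PA (q ^ 2) * PB (q ^ 2) := by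
  have hq2 := norm_sq_lt h1
  rw [sq (PA _), mul_assoc]
  unfold PB PA
  rw [(sq_tsum eA_le eA_le h1).1, (sq_tsum eA_le eB_le hq2).1,
    tsum_split (sq_tsum eA_le eA_le h1).2 _ _ bij2, two_mul]
  congr 1
  · apply tsum_congr; rintro ⟨x, y⟩
    rw [← pow_mul]; congr 1; zify; simp only [eB_cast, eA_cast]; ring
  · apply tsum_congr; rintro ⟨x, y⟩
    rw [← pow_mul]; congr 1; zify; simp only [eB_cast, eA_cast]; ring

lemma PA_neg (q : ℂ) : PA (-q) = PA q := by
  unfold PA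
  apply tsum_congr; intro n
  apply Even.neg_pow
  have := eA_cast n
  rw [← Int.even_coe_nat, this]
  exact Int.even_mul_succ_self n

lemma PB_neg_sq {q : ℂ} (h1 : ‖q‖ < 1) : PB (-q) ^ 2 = PB (q ^ 2) ^ 2 - q * PA (q ^ 2) ^ 2 := by
  have := PB_sq (q := -q) (by simpa using h1)
  rw [this]; simp; ring

lemma jacobi {q : ℂ} (h1 : ‖q‖ < 1) : PB q ^ 4 = q * PA q ^ 4 + PB (-q) ^ 4 := by
  have h1' := PB_sq h1
  have h2 := PB_neg_sq h1
  have h3 := PA_sq h1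
  have e1 : PB q ^ 4 = (PB q ^ 2) ^ 2 := by ring
  have e2 : PB (-q) ^ 4 = (PB (-q) ^ 2) ^ 2 := by ring
  have e3 : PA q ^ 4 = (PA q ^ 2) ^ 2 := by ring
  rw [e1, e2, e3, h1', h2, h3]; ring

lemma PB_zero : PB 0 = 1 := by
  unfold PB
  rw [tsum_eq_single 0]
  · simp [eB]
  · intro n hn
    apply zero_pow
    intro h
    have := eB_cast n
    rw [h] at this
    simp at this
    exact hn (by simpa using this.symm)

lemma PA_zero : PA 0 = 2 := by
  unfold PA
  rw [tsum_eq_sum (s := {0, -1})]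
  · simp [eA]; norm_num
  · intro n hn
    apply zero_pow
    intro h
    have := eA_cast n
    rw [h] at this
    simp at this hn
    omega

end TT

namespace TT
open Complex UpperHalfPlane ModularForm Filter Topology MatrixGroups
open scoped Real

lemma nome_lt {τ : ℂ} (h : 0 < τ.im) : ‖cexp (π * Complex.I * τ)‖ < 1 := by
  rw [Complex.norm_exp]
  simp
  positivity

lemma jt_B (τ : ℂ) : jacobiTheta₂ 0 τ = PB (cexp (π * Complex.I * τ)) := by
  unfold jacobiTheta₂ PB
  apply tsum_congr; intro n
  rw [jacobiTheta₂_term, ← Complex.exp_nat_mul]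
  have : ((eB n : ℕ) : ℂ) = (n : ℂ) ^ 2 := by exact_mod_cast congrArg (Int.cast : ℤ → ℂ) (eB_cast n)
  rw [this]; congr 1; ring

lemma jt_A (τ : ℂ) : jacobiTheta₂ (τ / 2) τ = PA (cexp (π * Complex.I * τ)) := by
  unfold jacobiTheta₂ PA
  apply tsum_congr; intro n
  rw [jacobiTheta₂_term, ← Complex.exp_nat_mul]
  have : ((eA n : ℕ) : ℂ) = (n : ℂ) * (n + 1) := by exact_mod_cast congrArg (Int.cast : ℤ → ℂ) (eA_cast n)
  rw [this]; congr 1; ring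

lemma jt_C (τ : ℂ) : jacobiTheta₂ (1 / 2) τ = PB (-cexp (π * Complex.I * τ)) := by
  unfold jacobiTheta₂ PB
  apply tsum_congr; intro n
  have : -cexp (π * Complex.I * τ) = cexp (π * Complex.I * τ + π * Complex.I) := by
    rw [Complex.exp_add, Complex.exp_pi_mul_I]; ring
  rw [jacobiTheta₂_term, this, ← Complex.exp_nat_mul]
  have : ((eB n : ℕ) : ℂ) = (n : ℂ) ^ 2 := by exact_mod_cast congrArg (Int.cast : ℤ → ℂ) (eB_cast n)
  rw [this, Complex.exp_eq_exp_iff_exists_int]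
  obtain ⟨k, hk⟩ := Int.even_mul_pred_self n
  refine ⟨-k, ?_⟩
  have hk' : (n : ℂ) * (n - 1) = k + k := by exact_mod_cast congrArg (Int.cast : ℤ → ℂ) hk
  push_cast
  linear_combination (-π * Complex.I) * hk'

noncomputable def Ph (τ : ℂ) : ℂ :=
  cexp (π * Complex.I * τ) ^ 2 * PA (cexp (π * Complex.I * τ)) ^ 8 +
    PB (cexp (π * Complex.I * τ)) ^ 8 + PB (-cexp (π * Complex.I * τ)) ^ 8

lemma cpow_eighth {w : ℂ} : (w ^ (1 / 2 : ℂ)) ^ 8 = w ^ 4 := by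
  rw [← Complex.cpow_nat_mul]
  norm_num

lemma negI4 (τ : ℂ) : (-Complex.I * τ) ^ 4 = τ ^ 4 := by
  have : (-Complex.I * τ) ^ 4 = Complex.I ^ 4 * τ ^ 4 := by ring
  rw [this, Complex.I_pow_four, one_mul]

lemma B_S {τ : ℂ} (h : τ ≠ 0) : PB (cexp (π * Complex.I * (-1 / τ))) ^ 8 =
    τ ^ 4 * PB (cexp (π * Complex.I * τ)) ^ 8 := by
  have := jacobiTheta₂_functional_equation 0 τ
  rw [zero_div, jt_B, jt_B] at this
  rw [this, mul_pow, mul_pow, div_pow, cpow_eighth, negI4]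
  field_simp
  simp

lemma C_S {τ : ℂ} (h : τ ≠ 0) : cexp (π * Complex.I * (-1 / τ)) ^ 2 *
    PA (cexp (π * Complex.I * (-1 / τ))) ^ 8 = τ ^ 4 * PB (-cexp (π * Complex.I * τ)) ^ 8 := by
  have := jacobiTheta₂_functional_equation (1 / 2) τ
  rw [show (1 / 2 / τ : ℂ) = - ((-1 / τ) / 2) by ring, jacobiTheta₂_neg_left, jt_C, jt_A] at this
  rw [this, mul_pow, mul_pow, div_pow, cpow_eighth, negI4, ← Complex.exp_nat_mul, ← Complex.exp_nat_mul]
  rw [show ((2 : ℕ) : ℂ) * (π * Complex.I * (-1 / τ)) = (8 : ℕ) * (-π * Complex.I * (1 / 2) ^ 2 / τ) by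
    push_cast; ring]
  field_simp

lemma Ph_S {τ : ℂ} (h : τ ≠ 0) : Ph (-1 / τ) = τ ^ 4 * Ph τ := by
  have h1 := B_S h
  have h2 := C_S h
  have h3 := C_S (τ := -1 / τ) (by simp [h])
  rw [show -1 / (-1 / τ) = τ by field_simp] at h3
  unfold Ph
  rw [h1, h2, h3]
  field_simp
  ring

lemma Ph_T (τ : ℂ) : Ph (τ + 1) = Ph τ := by
  unfold Ph
  have : cexp (π * Complex.I * (τ + 1)) = - cexp (π * Complex.I * τ) := by
    rw [mul_add, Complex.exp_add, mul_one, Complex.exp_pi_mul_I]; ring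
  rw [this, neg_neg, PA_neg]; ring

noncomputable def PhH : ℍ → ℂ := fun τ => Ph τ

lemma PhH_S : PhH ∣[(4 : ℤ)] ModularGroup.S = PhH := by
  ext z
  rw [SL_slash_apply, UpperHalfPlane.modular_S_smul, ModularGroup.denom_S]
  have hz := UpperHalfPlane.ne_zero z
  have := Ph_S hz
  rw [show -1 / (z : ℂ) = (-(z : ℂ))⁻¹ by rw [inv_neg]; ring] at this
  change Ph ((-(z : ℂ))⁻¹) * (z : ℂ) ^ (-(4 : ℤ)) = Ph z
  rw [this, zpow_neg]
  field_simp

lemma PhH_T : PhH ∣[(4 : ℤ)] ModularGroup.T = PhH := by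
  ext z
  rw [SL_slash_apply, modular_T_smul, ModularGroup.denom_apply]
  simp [PhH, ModularGroup.T]
  rw [add_comm, Ph_T]

lemma PhH_tendsto : Tendsto PhH atImInfty (𝓝 2) := by
  have h1 := qParam_tendsto_atImInfty (h := 2) two_pos
  have hB : Tendsto PB (𝓝 0) (𝓝 1) := by
    have := (PB_diff.differentiableAt (Metric.ball_mem_nhds 0 one_pos)).continuousAt.tendsto
    rwa [PB_zero] at this
  have hA : Tendsto PA (𝓝 0) (𝓝 2) := by
    have := (PA_diff.differentiableAt (Metric.ball_mem_nhds 0 one_pos)).continuousAt.tendsto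
    rwa [PA_zero] at this
  have h2 : Tendsto (fun q : ℂ => q ^ 2 * PA q ^ 8 + PB q ^ 8 + PB (-q) ^ 8) (𝓝 0) (𝓝 2) := by
    have hn : Tendsto (fun q : ℂ => -q) (𝓝 0) (𝓝 0) := by
      simpa using (continuous_neg (G := ℂ)).tendsto 0
    have := ((((tendsto_id (α := ℂ) (x := 𝓝 0)).pow 2).mul (hA.pow 8)).add (hB.pow 8)).add
      ((hB.comp hn).pow 8)
    have e : (0 : ℂ) ^ 2 * 2 ^ 8 + 1 ^ 8 + 1 ^ 8 = 2 := by norm_num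
    rw [e] at this
    exact this
  refine (h2.comp h1).congr fun τ => ?_
  simp only [Function.comp, PhH, Ph, Function.Periodic.qParam]
  rw [show 2 * π * Complex.I * (τ : ℂ) / ((2 : ℝ) : ℂ) = π * Complex.I * τ by push_cast; ring]

lemma Ph_diff : DifferentiableOn ℂ Ph {z | 0 < z.im} := by
  have he : Set.MapsTo (fun z : ℂ => cexp (π * Complex.I * z)) {z | 0 < z.im} (Metric.ball 0 1) := by
    intro z hz
    simpa using nome_lt hz
  have he' : Set.MapsTo (fun z : ℂ => -cexp (π * Complex.I * z)) {z | 0 < z.im} (Metric.ball 0 1) := by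
    intro z hz
    simpa using nome_lt hz
  have hA := PA_diff.comp (by fun_prop) he
  have hB := PB_diff.comp (by fun_prop) he
  have hC := PB_diff.comp (by fun_prop) he'
  have hq : DifferentiableOn ℂ (fun z : ℂ => cexp (π * Complex.I * z)) {z | 0 < z.im} := by fun_prop
  exact (((hq.pow 2).mul (hA.pow 8)).add (hB.pow 8)).add (hC.pow 8)

noncomputable def PhM : ModularForm 𝒮ℒ 4 where
  toFun := PhH
  slash_action_eq' A hA := by
    obtain ⟨A, rfl⟩ := hA
    exact SlashInvariantForm.slash_action_generators_SL2Z PhH_S PhH_T A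
  holo' := by
    rw [UpperHalfPlane.mdifferentiable_iff]
    refine Ph_diff.congr fun z hz ↦ ?_
    simp [PhH, ofComplex_apply_of_im_pos hz]
  bdd_at_cusps' hc := by
    rw [Subgroup.IsArithmetic.isCusp_iff_isCusp_SL2Z] at hc
    rw [OnePoint.isBoundedAt_iff_forall_SL2Z hc]
    intro γ _
    rw [SlashInvariantForm.slash_action_generators_SL2Z PhH_S PhH_T]
    exact PhH_tendsto.isBigO_one ℝ

lemma PhM_coeff : (qExpansion 1 PhM).coeff 0 = 2 := by
  rw [UpperHalfPlane.qExpansion_coeff_zero one_pos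
    (ModularFormClass.analyticAt_cuspFunction_zero PhM one_pos one_mem_strictPeriods_SL)
    (SlashInvariantFormClass.periodic_comp_ofComplex PhM one_mem_strictPeriods_SL)]
  exact PhH_tendsto.limUnder_eq

lemma PhM_eq : PhM = (2 : ℂ) • ModularForm.E₄ := by
  have h := (finrank_eq_one_iff_of_nonzero' ModularForm.E₄
    (EisensteinSeries.E_ne_zero (by norm_num) ⟨2, rfl⟩)).mp
    (Module.rank_eq_one_iff_finrank_eq_one.mp levelOne_weight_four_rank_one) PhM
  obtain ⟨c, hc⟩ := h
  have h2 := ModularForm.qExpansion_smul one_pos one_mem_strictPeriods_SL c ModularForm.E₄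
  have h3 : (qExpansion 1 PhM).coeff 0 = c := by
    rw [← hc, FunLike.coe_smul, h2]
    simp [-PowerSeries.coeff_zero_eq_constantCoeff, EisensteinSeries.E_qExpansion_coeff_zero _ ⟨2, rfl⟩]
  rw [PhM_coeff] at h3
  rw [← hc, ← h3]

lemma Ph_hasSum (τ : ℍ) : HasSum (fun m : ℕ => (if m = 0 then 2 else 480 * (sigma3 m : ℂ)) *
    cexp (2 * π * Complex.I * τ) ^ m) (Ph τ) := by
  have h := ModularForm.hasSum_qExpansion ModularForm.E₄ one_pos one_mem_strictPeriods_SL τ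
  have h2 : Ph τ = 2 * ModularForm.E₄ τ := by
    have := congrArg (fun f : ModularForm 𝒮ℒ 4 => f τ) PhM_eq
    exact this
  rw [h2]
  refine HasSum.congr_fun (h.mul_left 2) fun m => ?_
  rw [EisensteinSeries.E_qExpansion_coeff _ ⟨2, rfl⟩, Function.Periodic.qParam]
  have hb : bernoulli 4 = -1 / 30 := by decide +kernel
  have hs : (ArithmeticFunction.sigma (4 - 1) m) = sigma3 m := by
    rw [ArithmeticFunction.sigma_apply]; rfl
  rw [hs, hb]
  simp only [smul_eq_mul, ofReal_one, div_one]
  split_ifs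
  · ring
  · push_cast; ring

end TT

namespace TT
open Complex UpperHalfPlane Filter Topology
open scoped Real

lemma Ph_poly {p : ℂ} (h : ‖p‖ < 1) : p ^ 2 * PA p ^ 8 + PB p ^ 8 + PB (-p) ^ 8 =
    2 * PB (p ^ 2) ^ 8 + 28 * p ^ 2 * PA (p ^ 2) ^ 4 * PB (p ^ 2) ^ 4 + 2 * (p ^ 2) ^ 2 * PA (p ^ 2) ^ 8 := by
  have e1 : PB p ^ 8 = (PB p ^ 2) ^ 4 := by ring
  have e2 : PB (-p) ^ 8 = (PB (-p) ^ 2) ^ 4 := by ring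
  have e3 : PA p ^ 8 = (PA p ^ 2) ^ 4 := by ring
  rw [e1, e2, e3, PB_sq h, PB_neg_sq h, PA_sq h]; ring

lemma T_poly {x : ℂ} (h : ‖x‖ < 1) :
    (2 * PB x ^ 8 + 28 * x * PA x ^ 4 * PB x ^ 4 + 2 * x ^ 2 * PA x ^ 8) -
    (2 * PB (-x) ^ 8 + 28 * (-x) * PA (-x) ^ 4 * PB (-x) ^ 4 + 2 * (-x) ^ 2 * PA (-x) ^ 8) =
    240 * x * (PA (x ^ 2) ^ 2 * PB (x ^ 2) ^ 2 * (PB (x ^ 2) ^ 4 + x ^ 2 * PA (x ^ 2) ^ 4)) := by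
  rw [PA_neg]
  have e1 : PB x ^ 8 = (PB x ^ 2) ^ 4 := by ring
  have e2 : PB (-x) ^ 8 = (PB (-x) ^ 2) ^ 4 := by ring
  have e3 : PA x ^ 8 = (PA x ^ 2) ^ 4 := by ring
  have e4 : PB x ^ 4 = (PB x ^ 2) ^ 2 := by ring
  have e5 : PB (-x) ^ 4 = (PB (-x) ^ 2) ^ 2 := by ring
  have e6 : PA x ^ 4 = (PA x ^ 2) ^ 2 := by ring
  rw [e1, e2, e3, e4, e5, e6, PB_sq h, PB_neg_sq h, PA_sq h]; ring

lemma S_id {s : ℝ} (hs : s < 0) : HasSum (fun n : ℕ => (sigma3 (2 * n + 1) : ℂ) * (-cexp s) ^ n)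
    (PA (cexp s) ^ 2 * PB (-cexp s) ^ 2 * (PB (-cexp s) ^ 4 - cexp s * PA (cexp s) ^ 4) / 4) := by
  set t : ℂ := 1 / 4 - Complex.I * s / (4 * π) with ht
  have hpi : (π : ℂ) ≠ 0 := by exact_mod_cast Real.pi_ne_zero
  have him : t.im = -s / (4 * π) := by
    have : t = ((1 / 4 : ℝ) : ℂ) + ((-s / (4 * π) : ℝ) : ℂ) * Complex.I := by
      rw [ht]; push_cast; field_simp; ring
    rw [this, Complex.add_im, Complex.im_ofReal_mul, Complex.ofReal_im, Complex.I_im]; ring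
  have h0 : 0 < t.im := by
    rw [him]; apply div_pos <;> [linarith; positivity]
  have h0' : 0 < (t + 1 / 2).im := by
    have : (t + 1 / 2).im = t.im := by simp
    rw [this]; exact h0
  have k1 := Ph_hasSum ⟨t, h0⟩
  have k2 := Ph_hasSum ⟨t + 1 / 2, h0'⟩
  have hx2 : cexp (2 * π * Complex.I * t) ^ 2 = - cexp s := by
    rw [← Complex.exp_nat_mul, show ((2 : ℕ) : ℂ) * (2 * π * Complex.I * t) = s + π * Complex.I by
      rw [ht]; push_cast; field_simp; ring_nf; rw [Complex.I_sq]; ring, Complex.exp_add, Complex.exp_pi_mul_I]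
    ring
  have hx' : cexp (2 * π * Complex.I * (t + 1 / 2)) = - cexp (2 * π * Complex.I * t) := by
    rw [show 2 * π * Complex.I * (t + 1 / 2) = 2 * π * Complex.I * t + π * Complex.I by ring,
      Complex.exp_add, Complex.exp_pi_mul_I]
    ring
  have hp : cexp (π * Complex.I * t) ^ 2 = cexp (2 * π * Complex.I * t) := by
    rw [← Complex.exp_nat_mul]; congr 1; push_cast; ring
  have hp' : cexp (π * Complex.I * (t + 1 / 2)) ^ 2 = -cexp (2 * π * Complex.I * t) := by
    rw [← hx', ← Complex.exp_nat_mul]; congr 1; push_cast; ring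
  have k3 := k1.sub k2
  change HasSum _ (Ph t - Ph (t + 1 / 2)) at k3
  simp only at k3
  unfold Ph at k3
  rw [Ph_poly (nome_lt h0), Ph_poly (nome_lt h0'), hp, hp'] at k3
  have hxn : ‖cexp (2 * π * Complex.I * t)‖ < 1 := by
    rw [← hp]; exact norm_sq_lt (nome_lt h0)
  rw [T_poly hxn, hx2, hx', PA_neg] at k3
  have hx0 : cexp (2 * π * Complex.I * t) ≠ 0 := Complex.exp_ne_zero _
  generalize cexp (2 * π * Complex.I * t) = x at k3 hx2 hx0
  have hinj : Function.Injective (fun n : ℕ => 2 * n + 1) := fun a b h => by simpa using h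
  rw [← hinj.hasSum_iff] at k3
  · have := k3.mul_left (1 / (960 * x))
    have e : 1 / (960 * x) * (240 * x * (PA (cexp s) ^ 2 * PB (-cexp s) ^ 2 *
        (PB (-cexp s) ^ 4 + -cexp s * PA (cexp s) ^ 4))) =
      PA (cexp s) ^ 2 * PB (-cexp s) ^ 2 * (PB (-cexp s) ^ 4 - cexp s * PA (cexp s) ^ 4) / 4 := by
      field_simp; ring
    rw [e] at this
    refine HasSum.congr_fun this fun n => ?_
    simp only [Function.comp]
    rw [Odd.neg_pow ⟨n, rfl⟩, pow_succ, pow_mul, hx2, if_neg (by omega)]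
    field_simp
    ring
  · intro m hm
    have hev : Even m := by
      rw [← Nat.not_odd_iff_even]
      rintro ⟨k, hk⟩
      exact hm ⟨k, hk.symm⟩
    rw [hev.neg_pow, sub_self]

end TT

namespace TT
open Filter Topology

noncomputable def rA (x : ℝ) : ℝ := ∑' n : ℤ, x ^ eA n
noncomputable def rB (x : ℝ) : ℝ := ∑' n : ℤ, x ^ eB n

lemma PA_real (x : ℝ) : PA x = rA x := by
  unfold PA rA; push_cast; rfl

lemma PB_real (x : ℝ) : PB x = rB x := by
  unfold PB rB; push_cast; rfl

lemma PA_an {z : ℂ} (h : ‖z‖ < 1) : AnalyticAt ℂ PA z :=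
  PA_diff.analyticAt (Metric.isOpen_ball.mem_nhds (by simpa using h))

lemma PB_an {z : ℂ} (h : ‖z‖ < 1) : AnalyticAt ℂ PB z :=
  PB_diff.analyticAt (Metric.isOpen_ball.mem_nhds (by simpa using h))

lemma rA_an {x : ℝ} (h : |x| < 1) : AnalyticAt ℝ rA x := by
  have := (PA_an (z := x) (by simpa using h)).re_ofReal
  simpa [PA_real] using this

lemma rB_an {x : ℝ} (h : |x| < 1) : AnalyticAt ℝ rB x := by
  have := (PB_an (z := x) (by simpa using h)).re_ofReal
  simpa [PB_real] using this

lemma rB_sq {q : ℝ} (h : |q| < 1) : rB q ^ 2 = rB (q ^ 2) ^ 2 + q * rA (q ^ 2) ^ 2 := by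
  have := PB_sq (q := q) (by simpa using h)
  rw [← Complex.ofReal_pow, PB_real, PB_real, PA_real] at this
  exact_mod_cast this

lemma rA_sq {q : ℝ} (h : |q| < 1) : rA q ^ 2 = 2 * rA (q ^ 2) * rB (q ^ 2) := by
  have := PA_sq (q := q) (by simpa using h)
  rw [← Complex.ofReal_pow, PB_real, PA_real, PA_real] at this
  exact_mod_cast this

lemma rB_neg_sq {q : ℝ} (h : |q| < 1) : rB (-q) ^ 2 = rB (q ^ 2) ^ 2 - q * rA (q ^ 2) ^ 2 := by
  have := rB_sq (q := -q) (by simpa using h)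
  rw [this]; simp; ring

lemma rsummable {e : ℤ → ℕ} (he : ∀ n, n.natAbs ≤ e n + 1) {q : ℝ} (h0 : 0 ≤ q) (h : q < 1) :
    Summable (fun n : ℤ => q ^ e n) := summable_exp_int he h0 h

lemma rB_pos {q : ℝ} (h0 : 0 < q) (h : q < 1) : 0 < rB q :=
  (rsummable eB_le h0.le h).tsum_pos (fun n => by positivity) 0 (by positivity)

lemma rA_pos {q : ℝ} (h0 : 0 < q) (h : q < 1) : 0 < rA q :=
  (rsummable eA_le h0.le h).tsum_pos (fun n => by positivity) 0 (by positivity)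

lemma rB_zero : rB 0 = 1 := by
  have := PB_real 0
  rw [Complex.ofReal_zero, PB_zero] at this
  exact_mod_cast this.symm

lemma rA_zero : rA 0 = 2 := by
  have := PA_real 0
  rw [Complex.ofReal_zero, PA_zero] at this
  exact_mod_cast this.symm

noncomputable def thA (s : ℝ) : ℝ := Real.exp (s / 4) * rA (Real.exp s)
noncomputable def thB (s : ℝ) : ℝ := rB (Real.exp s)
noncomputable def thC (s : ℝ) : ℝ := rB (-Real.exp s)
noncomputable def thV (s : ℝ) : ℝ := Real.exp s * (deriv rB (Real.exp s) / rB (Real.exp s))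

lemma abs_exp_lt {s : ℝ} (hs : s < 0) : |Real.exp s| < 1 := by
  rw [abs_of_pos (Real.exp_pos s)]; simpa using hs

lemma thA_pos {s : ℝ} (hs : s < 0) : 0 < thA s :=
  mul_pos (Real.exp_pos _) (rA_pos (Real.exp_pos _) (by simpa using hs))

lemma thB_pos {s : ℝ} (hs : s < 0) : 0 < thB s := rB_pos (Real.exp_pos _) (by simpa using hs)

lemma exp_two_mul' (s : ℝ) : Real.exp (2 * s) = Real.exp s ^ 2 := by
  rw [← Real.exp_nat_mul]; norm_num

lemma exp_half_sq (s : ℝ) : Real.exp (2 * s / 4) ^ 2 = Real.exp s := by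
  rw [← Real.exp_nat_mul]; congr 1; push_cast; ring

lemma thA_sq {s : ℝ} (hs : s < 0) : thA s ^ 2 = 2 * thA (2 * s) * thB (2 * s) := by
  unfold thA thB
  rw [mul_pow, rA_sq (abs_exp_lt hs), exp_two_mul', ← Real.exp_nat_mul,
    show ((2 : ℕ) : ℝ) * (s / 4) = 2 * s / 4 by push_cast; ring]
  ring

lemma thB_sq {s : ℝ} (hs : s < 0) : thB s ^ 2 = thB (2 * s) ^ 2 + thA (2 * s) ^ 2 := by
  unfold thA thB
  rw [rB_sq (abs_exp_lt hs), exp_two_mul', mul_pow, exp_half_sq]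

lemma thC_sq {s : ℝ} (hs : s < 0) : thC s ^ 2 = thB (2 * s) ^ 2 - thA (2 * s) ^ 2 := by
  unfold thA thB thC
  rw [rB_neg_sq (abs_exp_lt hs), exp_two_mul', mul_pow, exp_half_sq]

lemma th_jac {s : ℝ} (hs : s < 0) : thB s ^ 4 = thA s ^ 4 + thC s ^ 4 := by
  have e1 : thB s ^ 4 = (thB s ^ 2) ^ 2 := by ring
  have e2 : thA s ^ 4 = (thA s ^ 2) ^ 2 := by ring
  have e3 : thC s ^ 4 = (thC s ^ 2) ^ 2 := by ring
  rw [e1, e2, e3, thA_sq hs, thB_sq hs, thC_sq hs]; ring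

lemma exp_an (s : ℝ) : AnalyticAt ℝ Real.exp s := analyticAt_rexp

lemma thA_an {s : ℝ} (hs : s < 0) : AnalyticAt ℝ thA s := by
  have h1 : AnalyticAt ℝ (fun s : ℝ => Real.exp (s / 4)) s := by fun_prop
  exact h1.mul ((rA_an (abs_exp_lt hs)).fun_comp (exp_an s))

lemma thB_an {s : ℝ} (hs : s < 0) : AnalyticAt ℝ thB s :=
  (rB_an (abs_exp_lt hs)).fun_comp (exp_an s)

lemma thC_an {s : ℝ} (hs : s < 0) : AnalyticAt ℝ thC s :=
  AnalyticAt.fun_comp (g := rB) (f := fun s => -Real.exp s) (rB_an (by simpa using hs)) (exp_an s).neg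

/-- logarithmic derivative of `rB` -/
noncomputable def gB (x : ℝ) : ℝ := deriv rB x / rB x
noncomputable def gA (x : ℝ) : ℝ := deriv rA x / rA x

lemma gB_an {x : ℝ} (h0 : 0 ≤ x) (h : x < 1) : AnalyticAt ℝ gB x := by
  have := rB_an (x := x) (by rwa [abs_of_nonneg h0])
  refine this.deriv.div this ?_
  rcases h0.eq_or_lt with rfl | h0
  · rw [rB_zero]; exact one_ne_zero
  · exact (rB_pos h0 h).ne'

lemma gA_an {x : ℝ} (h0 : 0 ≤ x) (h : x < 1) : AnalyticAt ℝ gA x := by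
  have := rA_an (x := x) (by rwa [abs_of_nonneg h0])
  refine this.deriv.div this ?_
  rcases h0.eq_or_lt with rfl | h0
  · rw [rA_zero]; exact two_ne_zero
  · exact (rA_pos h0 h).ne'

lemma thB_der {s : ℝ} (hs : s < 0) : HasDerivAt thB (thB s * thV s) s := by
  have h1 := (rB_an (abs_exp_lt hs)).differentiableAt.hasDerivAt.comp s (Real.hasDerivAt_exp s)
  refine h1.congr_deriv ?_
  have := (thB_pos hs).ne'
  unfold thB at this
  unfold thV thB
  field_simp

lemma thA_der0 {s : ℝ} (hs : s < 0) :
    HasDerivAt thA (thA s * (1 / 4 + Real.exp s * gA (Real.exp s))) s := by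
  have h1 := (rA_an (abs_exp_lt hs)).differentiableAt.hasDerivAt.comp s (Real.hasDerivAt_exp s)
  have h2 : HasDerivAt (fun s : ℝ => Real.exp (s / 4)) (Real.exp (s / 4) * (1 / 4)) s :=
    ((hasDerivAt_id s).div_const 4).exp
  refine (h2.mul h1).congr_deriv ?_
  have := (rA_pos (Real.exp_pos s) (by simpa using hs)).ne'
  unfold thA gA
  simp only [Function.comp]
  field_simp

lemma tend_iter {s : ℝ} (hs : s < 0) : Tendsto (fun n : ℕ => 2 ^ n * s) atTop atBot :=
  (tendsto_pow_atTop_atTop_of_one_lt one_lt_two).atTop_mul_const_of_neg hs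

lemma iter_neg {s : ℝ} (hs : s < 0) (n : ℕ) : 2 ^ n * s < 0 := mul_neg_of_pos_of_neg (by positivity) hs

lemma eq_of_double {f : ℝ → ℝ} {l : ℝ} (hf : ∀ s < 0, f s = f (2 * s)) (hl : Tendsto f atBot (𝓝 l))
    {s : ℝ} (hs : s < 0) : f s = l := by
  have h1 : ∀ n : ℕ, f (2 ^ n * s) = f s := by
    intro n
    induction n with
    | zero => simp
    | succ n ih =>
      rw [← ih, hf _ (iter_neg hs n)]
      congr 1; ring
  have := hl.comp (tend_iter hs)
  refine tendsto_nhds_unique (tendsto_const_nhds.congr fun n => (h1 n).symm) this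

lemma tend_an {g : ℝ → ℝ} (h : AnalyticAt ℝ g 0) : Tendsto (fun s => g (Real.exp s)) atBot (𝓝 (g 0)) :=
  h.continuousAt.tendsto.comp Real.tendsto_exp_atBot

lemma thB_tend : Tendsto thB atBot (𝓝 1) := by
  have := tend_an (rB_an (x := 0) (by simp)); rwa [rB_zero] at this

lemma thC_tend : Tendsto thC atBot (𝓝 1) := by
  have h := tend_an (g := fun x => rB (-x)) (AnalyticAt.fun_comp (g := rB) (f := fun s => -s)
    (rB_an (by simp)) (by fun_prop))
  simp only [neg_zero, rB_zero] at h
  exact h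

lemma thA_tend : Tendsto thA atBot (𝓝 0) := by
  have h1 := tend_an (rA_an (x := 0) (by simp))
  have h2 : Tendsto (fun s : ℝ => Real.exp (s / 4)) atBot (𝓝 0) :=
    Real.tendsto_exp_atBot.comp (tendsto_id.atBot_div_const (by norm_num))
  have h3 := h2.mul h1
  rw [zero_mul] at h3
  exact h3

lemma thC_ne {s : ℝ} (hs : s < 0) : thC s ≠ 0 := by
  intro h0
  have key : ∀ s < 0, thC s = 0 → thC (2 * s) = 0 := by
    intro s hs h
    have h2 : 2 * s < 0 := by linarith
    have h1 := thC_sq hs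
    have h3 := th_jac h2
    rw [h] at h1
    have : thC (2 * s) ^ 4 = 0 := by linear_combination (thB (2*s)^2 + thA (2*s)^2) * (-h1) - h3
    exact pow_eq_zero_iff (by norm_num) |>.mp this
  have h1 : ∀ n : ℕ, thC (2 ^ n * s) = 0 := by
    intro n
    induction n with
    | zero => simpa using h0
    | succ n ih => rw [pow_succ', mul_assoc]; exact key _ (iter_neg hs n) ih
  have := thC_tend.comp (tend_iter hs)
  have h2 := tendsto_nhds_unique (tendsto_const_nhds.congr fun n => (h1 n).symm) this
  norm_num at h2

lemma dbl_der {f : ℝ → ℝ} {d s : ℝ} (h : HasDerivAt f d (2 * s)) :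
    HasDerivAt (fun s => f (2 * s)) (d * 2) s := by
  have h2 : HasDerivAt (fun s : ℝ => 2 * s) 2 s := by simpa using (hasDerivAt_id s).const_mul 2
  exact h.comp s h2

noncomputable def thU (s : ℝ) : ℝ := 1 / 4 + Real.exp s * gA (Real.exp s)

lemma ev_neg {s : ℝ} (hs : s < 0) : ∀ᶠ t in 𝓝 s, t < 0 := Iio_mem_nhds hs

/-- logarithmic derivative of the duplication relation for `thA` -/
lemma thU_dbl {s : ℝ} (hs : s < 0) : thU s = thU (2 * s) + thV (2 * s) := by
  have h2 : 2 * s < 0 := by linarith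
  have l := (thA_der0 hs).pow 2
  have r := ((dbl_der (thA_der0 h2)).mul (dbl_der (thB_der h2))).const_mul 2
  have e : (fun t => thA t ^ 2) =ᶠ[𝓝 s] fun t => 2 * (thA (2 * t) * thB (2 * t)) := by
    filter_upwards [ev_neg hs] with t ht
    rw [thA_sq ht]; ring
  have := l.unique (r.congr_of_eventuallyEq e)
  have q := thA_sq hs
  have ha := thA_pos hs
  unfold thU
  push_cast at this
  have k : thA s ^ 2 ≠ 0 := by positivity
  apply mul_left_cancel₀ k
  apply mul_left_cancel₀ (two_ne_zero (α := ℝ))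
  linear_combination this - 2 * ((1 / 4 + Real.exp (2 * s) * gA (Real.exp (2 * s))) + thV (2 * s)) * q

lemma thV_dbl0 {s : ℝ} (hs : s < 0) : thB s ^ 2 * thV s =
    2 * (thB (2 * s) ^ 2 * thV (2 * s) + thA (2 * s) ^ 2 * thU (2 * s)) := by
  have h2 : 2 * s < 0 := by linarith
  have l := (thB_der hs).pow 2
  have r := ((dbl_der (thB_der h2)).pow 2).add ((dbl_der (thA_der0 h2)).pow 2)
  have e : (fun t => thB t ^ 2) =ᶠ[𝓝 s] fun t => thB (2 * t) ^ 2 + thA (2 * t) ^ 2 := by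
    filter_upwards [ev_neg hs] with t ht
    rw [thB_sq ht]
  have := l.unique (r.congr_of_eventuallyEq e)
  unfold thU
  push_cast at this
  linear_combination this / 2

lemma thV_tend : Tendsto thV atBot (𝓝 0) := by
  have h1 := tend_an (gB_an le_rfl one_pos)
  have h2 := Real.tendsto_exp_atBot.mul h1
  rw [zero_mul] at h2; exact h2

lemma thU_tend : Tendsto thU atBot (𝓝 (1 / 4)) := by
  have h1 := tend_an (gA_an le_rfl one_pos)
  have h2 := (Real.tendsto_exp_atBot.mul h1).const_add (1 / 4)
  rw [zero_mul, add_zero] at h2; exact h2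

lemma thU_eq {s : ℝ} (hs : s < 0) : thU s = thV s + thC s ^ 4 / 4 := by
  have hR : ∀ s < 0, (thU s - thV s) / thC s ^ 4 = (thU (2 * s) - thV (2 * s)) / thC (2 * s) ^ 4 := by
    intro s hs
    have h2 : 2 * s < 0 := by linarith
    have u := thU_dbl hs
    have v := thV_dbl0 hs
    have j := th_jac h2
    have b2 := thB_sq hs
    have c2 := thC_sq hs
    have c0 := thC_ne hs
    have c1 := thC_ne h2
    have hb := thB_pos hs
    rw [div_eq_div_iff (by positivity) (by positivity)]
    have k : thB s ^ 2 ≠ 0 := by positivity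
    apply mul_left_cancel₀ k
    have e3 : thC s ^ 4 = (thC s ^ 2) ^ 2 := by ring
    have e4 : thC (2 * s) ^ 4 = (thB (2 * s) ^ 2 - thA (2 * s) ^ 2) * (thB (2 * s) ^ 2 + thA (2 * s) ^ 2) := by
      linear_combination -j
    have v' : thB s ^ 2 * (thU s - thV s) = (thU (2 * s) - thV (2 * s)) *
      (thB (2 * s) ^ 2 - thA (2 * s) ^ 2) := by
      rw [mul_sub, v, u, b2]; ring
    rw [e3, c2, e4, ← mul_assoc, v', b2]; ring
  have hl : Tendsto (fun s => (thU s - thV s) / thC s ^ 4) atBot (𝓝 (1 / 4)) := by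
    have := (thU_tend.sub thV_tend).div (thC_tend.pow 4) (by norm_num)
    rw [show ((1 : ℝ) / 4 - 0) / 1 ^ 4 = 1 / 4 by norm_num] at this
    exact this
  have := eq_of_double hR hl hs
  have c0 := thC_ne hs
  rw [div_eq_iff (by positivity)] at this
  linear_combination this

lemma thA_der {s : ℝ} (hs : s < 0) : HasDerivAt thA (thA s * (thV s + thC s ^ 4 / 4)) s := by
  rw [← thU_eq hs]; exact thA_der0 hs

lemma thC_der {s : ℝ} (hs : s < 0) : HasDerivAt thC (thC s * (thV s - thA s ^ 4 / 4)) s := by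
  have d := (thC_an hs).differentiableAt.hasDerivAt
  have l := (d.pow 4)
  have r := ((thB_der hs).pow 4).sub ((thA_der hs).pow 4)
  have e : (fun t => thC t ^ 4) =ᶠ[𝓝 s] fun t => thB t ^ 4 - thA t ^ 4 := by
    filter_upwards [ev_neg hs] with t ht
    rw [th_jac ht]; ring
  have := l.unique (r.congr_of_eventuallyEq e)
  refine d.congr_deriv ?_
  have c0 := thC_ne hs
  have k : 4 * thC s ^ 3 ≠ 0 := by positivity
  apply mul_left_cancel₀ k
  push_cast at this
  rw [this]
  linear_combination 4 * thV s * th_jac hs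

lemma thV_an {s : ℝ} (hs : s < 0) : AnalyticAt ℝ thV s := by
  have h := (gB_an (Real.exp_pos s).le (by simpa using hs)).fun_comp (exp_an s)
  exact (exp_an s).mul h

lemma thV_dbl {s : ℝ} (hs : s < 0) : thV s = 2 * thV (2 * s) +
    (thA (2 * s) ^ 2 * thB (2 * s) ^ 2 - thA (2 * s) ^ 4) / 2 := by
  have h2 : 2 * s < 0 := by linarith
  have v := thV_dbl0 hs
  rw [thU_eq h2] at v
  have j := th_jac h2
  have b2 := thB_sq hs
  have hb := thB_pos hs
  have k : thB s ^ 2 ≠ 0 := by positivity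
  apply mul_left_cancel₀ k
  rw [v, b2]
  linear_combination - thA (2 * s) ^ 2 / 2 * j

noncomputable def thE (s : ℝ) : ℝ := deriv thV s - 2 * thV s ^ 2 - thA s ^ 4 * thC s ^ 4 / 8

lemma thE_dbl {s : ℝ} (hs : s < 0) : thE s = 4 * thE (2 * s) := by
  have h2 : 2 * s < 0 := by linarith
  have dA := dbl_der (thA_der h2)
  have dB := dbl_der (thB_der h2)
  have dV := dbl_der (thV_an h2).differentiableAt.hasDerivAt
  have r := (dV.const_mul 2).add ((((dA.pow 2).mul (dB.pow 2)).sub (dA.pow 4)).div_const 2)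
  have e : thV =ᶠ[𝓝 s] fun s => 2 * thV (2 * s) +
    (thA (2 * s) ^ 2 * thB (2 * s) ^ 2 - thA (2 * s) ^ 4) / 2 := by
    filter_upwards [ev_neg hs] with t ht
    exact thV_dbl ht
  have := (r.congr_of_eventuallyEq e).deriv
  have e1 : thA s ^ 4 = (thA s ^ 2) ^ 2 := by ring
  have e3 : thC s ^ 4 = (thC s ^ 2) ^ 2 := by ring
  unfold thE
  rw [this, thV_dbl hs, e1, e3, thA_sq hs, thC_sq hs]
  have j : thC (2 * s) ^ 4 = thB (2 * s) ^ 4 - thA (2 * s) ^ 4 := by rw [th_jac h2]; ring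
  simp only [Pi.pow_apply]
  push_cast
  rw [j]
  ring

noncomputable def kE (x : ℝ) : ℝ := gB x + x * deriv gB x - 2 * x * gB x ^ 2 - rA x ^ 4 * rB (-x) ^ 4 / 8

lemma thE_eq {s : ℝ} (hs : s < 0) : thE s = Real.exp s * kE (Real.exp s) := by
  have h := (gB_an (Real.exp_pos s).le (by simpa using hs)).differentiableAt.hasDerivAt.comp s
    (Real.hasDerivAt_exp s)
  have h1 := ((Real.hasDerivAt_exp s).mul h).deriv
  unfold thE
  have e : deriv thV s = deriv (Real.exp * gB ∘ Real.exp) s := rfl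
  rw [e, h1]
  unfold kE thV thA thC
  have e4 : Real.exp (s / 4) ^ 4 = Real.exp s := by
    rw [← Real.exp_nat_mul, show ((4 : ℕ) : ℝ) * (s / 4) = s by push_cast; ring]
  rw [mul_pow (Real.exp (s / 4)), e4]
  simp only [Function.comp, gB]
  ring

lemma thE_zero {s : ℝ} (hs : s < 0) : thE s = 0 := by
  have h1 : ∀ n : ℕ, (2 ^ n) ^ 2 * thE (2 ^ n * s) = thE s := by
    intro n
    induction n with
    | zero => simp
    | succ n ih =>
      rw [← ih, thE_dbl (iter_neg hs n), show (2 : ℝ) ^ (n + 1) * s = 2 * (2 ^ n * s) by ring]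
      ring
  have hk : Tendsto (fun s => kE (Real.exp s)) atBot (𝓝 (kE 0)) := by
    apply tend_an
    have g := gB_an (x := 0) le_rfl one_pos
    have a := rA_an (x := 0) (by simp)
    have c : AnalyticAt ℝ (fun x => rB (-x)) 0 := (AnalyticAt.fun_comp (g := rB) (f := fun s => -s)
      (rB_an (by simp)) (by fun_prop))
    have g' := g.deriv
    have i : AnalyticAt ℝ (fun x : ℝ => x) 0 := analyticAt_id
    exact ((g.add (i.mul g')).sub ((analyticAt_const.mul i).mul (g.pow 2))).sub
      (((a.pow 4).mul (c.pow 4)).div_const)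
  have h2 : Tendsto (fun t : ℝ => t ^ 2 * Real.exp (s * t)) atTop (𝓝 0) := by
    have := Real.tendsto_pow_mul_exp_neg_atTop_nhds_zero 2
    have h3 := (this.comp (tendsto_id.const_mul_atTop (neg_pos.mpr hs))).const_mul (1 / s ^ 2)
    rw [mul_zero] at h3
    refine h3.congr fun t => ?_
    simp only [Function.comp, id]
    have := hs.ne
    rw [show -(-s * t) = s * t by ring]
    field_simp
  have h3 : Tendsto (fun n : ℕ => ((2 : ℝ) ^ n) ^ 2 * Real.exp (s * 2 ^ n)) atTop (𝓝 0) :=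
    h2.comp (tendsto_pow_atTop_atTop_of_one_lt one_lt_two)
  have h4 := h3.mul (hk.comp (tend_iter hs))
  rw [zero_mul] at h4
  refine tendsto_nhds_unique (tendsto_const_nhds.congr fun n => ?_) h4
  rw [← h1 n, thE_eq (iter_neg hs n)]
  simp only [Function.comp]
  rw [mul_comm s]; ring

lemma thV_der {s : ℝ} (hs : s < 0) : HasDerivAt thV (2 * thV s ^ 2 + thA s ^ 4 * thC s ^ 4 / 8) s := by
  refine (thV_an hs).differentiableAt.hasDerivAt.congr_deriv ?_
  have := thE_zero hs
  unfold thE at this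
  linear_combination this

end TT

namespace TT
open Filter Topology

def PolyBd (c : ℕ → ℝ) : Prop := ∃ K : ℝ, ∃ k : ℕ, ∀ n, |c n| ≤ K * ((n : ℝ) + 1) ^ k

noncomputable def ser (c : ℕ → ℝ) (x r : ℝ) : ℝ := ∑' n : ℕ, c n * Real.exp (((n : ℝ) + x) * r)

noncomputable def dc (x : ℝ) (c : ℕ → ℝ) : ℕ → ℝ := fun n => ((n : ℝ) + x) * c n

lemma dc_bd {c : ℕ → ℝ} (h : PolyBd c) {x : ℝ} (hx : 0 ≤ x) : PolyBd (dc x c) := by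
  obtain ⟨K, k, h⟩ := h
  refine ⟨(1 + x) * K, k + 1, fun n => ?_⟩
  have hn : (0 : ℝ) ≤ n := n.cast_nonneg
  unfold dc
  rw [abs_mul, abs_of_nonneg (by positivity)]
  have h1 : (n : ℝ) + x ≤ (1 + x) * (n + 1) := by nlinarith
  calc ((n : ℝ) + x) * |c n| ≤ ((1 + x) * (n + 1)) * (K * ((n : ℝ) + 1) ^ k) :=
        mul_le_mul h1 (h n) (abs_nonneg _) (by positivity)
    _ = _ := by ring

lemma bd_summable {c : ℕ → ℝ} (h : PolyBd c) {x r : ℝ} (hx : 0 ≤ x) (hr : r < 0) :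
    Summable (fun n : ℕ => |c n| * Real.exp (((n : ℝ) + x) * r)) := by
  obtain ⟨K, k, h⟩ := h
  have h1 : Real.exp r < 1 := by simpa using hr
  have h2 := summable_pow_mul_geometric_of_norm_lt_one k
    (r := Real.exp r) (by simpa using hr)
  have h3 := (((summable_nat_add_iff 1).mpr h2).mul_left (K * Real.exp (-r)))
  refine h3.of_nonneg_of_le (fun n => by positivity) (fun n => ?_)
  have h4 : Real.exp (((n : ℝ) + x) * r) ≤ Real.exp (-r) * Real.exp r ^ (n + 1) := by
    rw [← Real.exp_nat_mul, ← Real.exp_add]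
    apply Real.exp_le_exp.mpr
    push_cast
    nlinarith
  calc |c n| * Real.exp (((n : ℝ) + x) * r)
      ≤ (K * ((n : ℝ) + 1) ^ k) * (Real.exp (-r) * Real.exp r ^ (n + 1)) :=
        mul_le_mul (h n) h4 (Real.exp_pos _).le ((abs_nonneg _).trans (h n))
    _ = _ := by push_cast; ring

lemma ser_summable {c : ℕ → ℝ} (h : PolyBd c) {x r : ℝ} (hx : 0 ≤ x) (hr : r < 0) :
    Summable (fun n : ℕ => c n * Real.exp (((n : ℝ) + x) * r)) := by
  apply Summable.of_norm
  refine (bd_summable h hx hr).congr fun n => ?_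
  rw [norm_mul, Real.norm_eq_abs, Real.norm_of_nonneg (Real.exp_pos _).le]

lemma ser_der {c : ℕ → ℝ} (h : PolyBd c) {x r : ℝ} (hx : 0 ≤ x) (hr : r < 0) :
    HasDerivAt (ser c x) (ser (dc x c) x r) r := by
  obtain ⟨r0, h1, h2⟩ := exists_between hr
  refine hasDerivAt_tsum_of_isPreconnected (t := Set.Iio r0)
    (bd_summable (dc_bd h hx) hx h2) isOpen_Iio isPreconnected_Iio
    (g' := fun n r => dc x c n * Real.exp (((n : ℝ) + x) * r)) (fun n y hy => ?_) (fun n y hy => ?_)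
    h1 (ser_summable h hx hr) h1
  · have : HasDerivAt (fun y : ℝ => ((n : ℝ) + x) * y) ((n : ℝ) + x) y := by
      simpa using (hasDerivAt_id y).const_mul ((n : ℝ) + x)
    refine (this.exp.const_mul (c n)).congr_deriv ?_
    unfold dc; ring
  · rw [norm_mul, Real.norm_eq_abs, Real.norm_of_nonneg (Real.exp_pos _).le]
    gcongr
    exact le_of_lt hy

lemma ser_tend0 {c : ℕ → ℝ} (h : PolyBd c) : Tendsto (ser c 0) atBot (𝓝 (c 0)) := by
  have h1 : Tendsto (ser c 0) atBot (𝓝 (∑' n : ℕ, if n = 0 then c 0 else 0)) := by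
    refine tendsto_tsum_of_dominated_convergence (bd_summable h le_rfl (neg_one_lt_zero)) ?_ ?_
    · intro n
      split_ifs with hn
      · subst hn; simp
      · have hn' : (0 : ℝ) < n + 0 := by
          have : (0 : ℝ) < n := by exact_mod_cast Nat.pos_of_ne_zero hn
          linarith
        have := (Real.tendsto_exp_atBot.comp (tendsto_id.const_mul_atBot hn')).const_mul (c n)
        rw [mul_zero] at this
        exact this
    · filter_upwards [eventually_le_atBot (-1)] with r hr n
      rw [norm_mul, Real.norm_eq_abs, Real.norm_of_nonneg (Real.exp_pos _).le]
      gcongr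
  simpa using h1

lemma ser_shift (c : ℕ → ℝ) (x r : ℝ) : ser c x r = Real.exp (x * r) * ser c 0 r := by
  unfold ser
  rw [← tsum_mul_left]
  apply tsum_congr; intro n
  rw [show ((n : ℝ) + x) * r = x * r + ((n : ℝ) + 0) * r by ring, Real.exp_add]; ring

lemma ser_tend {c : ℕ → ℝ} (h : PolyBd c) {x : ℝ} (hx : 0 < x) : Tendsto (ser c x) atBot (𝓝 0) := by
  have h1 := (Real.tendsto_exp_atBot.comp (tendsto_id.const_mul_atBot hx)).mul (ser_tend0 h)
  rw [zero_mul] at h1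
  refine h1.congr fun r => ?_
  rw [ser_shift c x]; rfl

/-- the hypergeometric coefficients -/
noncomputable def hc (x : ℝ) (n : ℕ) : ℝ :=
  ((ascPochhammer ℝ n).eval (1 / 2 + x)) ^ 3 / ((ascPochhammer ℝ n).eval (1 + x)) ^ 3

lemma hc_zero (x : ℝ) : hc x 0 = 1 := by simp [hc]

lemma hc_succ {x : ℝ} (hx : 0 ≤ x) (n : ℕ) :
    hc x (n + 1) * ((n : ℝ) + 1 + x) ^ 3 = hc x n * ((n : ℝ) + 1 / 2 + x) ^ 3 := by
  unfold hc
  rw [ascPochhammer_succ_eval, ascPochhammer_succ_eval]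
  have h1 : 0 < (ascPochhammer ℝ n).eval (1 + x) := ascPochhammer_pos n _ (by positivity)
  have h2 : (0 : ℝ) < 1 + x + n := by positivity
  have h3 : (n : ℝ) + 1 + x = 1 + x + n := by ring
  rw [h3]
  field_simp
  ring

lemma hc_nonneg {x : ℝ} (hx : 0 ≤ x) (n : ℕ) : 0 ≤ hc x n := by
  have h1 : 0 < (ascPochhammer ℝ n).eval (1 + x) := ascPochhammer_pos n _ (by positivity)
  have h2 : 0 < (ascPochhammer ℝ n).eval (1 / 2 + x) := ascPochhammer_pos n _ (by positivity)
  unfold hc; positivity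

lemma hc_le {x : ℝ} (hx : 0 ≤ x) (n : ℕ) : hc x n ≤ 1 := by
  induction n with
  | zero => rw [hc_zero]
  | succ n ih =>
    have h := hc_succ hx n
    have h0 := hc_nonneg hx n
    have hp : (0 : ℝ) < ((n : ℝ) + 1 + x) ^ 3 := by positivity
    have h1 : ((n : ℝ) + 1 / 2 + x) ^ 3 ≤ ((n : ℝ) + 1 + x) ^ 3 := by
      gcongr; norm_num
    have h2 : hc x (n + 1) * ((n : ℝ) + 1 + x) ^ 3 ≤ 1 * ((n : ℝ) + 1 + x) ^ 3 := by
      rw [h]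
      exact mul_le_mul ih h1 (by positivity) zero_le_one
    exact le_of_mul_le_mul_right h2 hp

lemma hc_bd {x : ℝ} (hx : 0 ≤ x) : PolyBd (hc x) :=
  ⟨1, 0, fun n => by rw [abs_of_nonneg (hc_nonneg hx n)]; simpa using hc_le hx n⟩

lemma hyp_ode {x r : ℝ} (hx : 0 ≤ x) (hr : r < 0) :
    ser (dc x (dc x (dc x (hc x)))) x r = x ^ 3 * Real.exp (x * r) + Real.exp r *
      (ser (dc x (dc x (dc x (hc x)))) x r + 3 / 2 * ser (dc x (dc x (hc x))) x r +
        3 / 4 * ser (dc x (hc x)) x r + 1 / 8 * ser (hc x) x r) := by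
  have b0 := hc_bd hx
  have b1 := dc_bd b0 hx
  have b2 := dc_bd b1 hx
  have b3 := dc_bd b2 hx
  have s0 := ser_summable b0 hx hr
  have s1 := ser_summable b1 hx hr
  have s2 := ser_summable b2 hx hr
  have s3 := ser_summable b3 hx hr
  conv_lhs => unfold ser
  rw [s3.tsum_eq_zero_add]
  congr 1
  · simp [dc, hc_zero]; ring
  · have t := (((s3.hasSum.add (s2.hasSum.mul_left (3 / 2))).add (s1.hasSum.mul_left (3 / 4))).add
      (s0.hasSum.mul_left (1 / 8))).mul_left (Real.exp r)
    refine Eq.trans (tsum_congr fun n => ?_) t.tsum_eq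
    have h := hc_succ hx n
    have e : Real.exp ((((n + 1 : ℕ) : ℝ) + x) * r) = Real.exp r * Real.exp (((n : ℝ) + x) * r) := by
      rw [← Real.exp_add]; congr 1; push_cast; ring
    rw [e]
    unfold dc
    push_cast
    linear_combination (Real.exp r * Real.exp (((n : ℝ) + x) * r)) * h

lemma F4_eq {x z : ℝ} (hz : 0 < z) : F4 x z = ser (hc x) x (Real.log z) := by
  unfold F4 ser hc
  apply tsum_congr; intro n
  rw [Real.rpow_def_of_pos hz, mul_comm (Real.log z)]; ring

lemma const_of_der {h : ℝ → ℝ} {s0 l : ℝ} (hd : ∀ s < s0, HasDerivAt h 0 s)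
    (hl : Tendsto h atBot (𝓝 l)) {s : ℝ} (hs : s < s0) : h s = l := by
  have key : ∀ t < s0, h t = h s := by
    intro t ht
    exact isOpen_Iio.is_const_of_deriv_eq_zero isPreconnected_Iio
      (fun u hu => (hd u hu).differentiableAt.differentiableWithinAt)
      (fun u hu => (hd u hu).deriv) ht hs
  refine tendsto_nhds_unique (tendsto_const_nhds.congr' ?_) hl
  filter_upwards [eventually_lt_atBot s0] with t ht
  exact (key t ht).symm

end TT

namespace TT
open Filter Topology
open scoped Real

lemma thAC_pi : thA (-π) ^ 8 = thC (-π) ^ 8 := by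
  have h := C_S (τ := Complex.I) Complex.I_ne_zero
  have e1 : Complex.exp (π * Complex.I * (-1 / Complex.I)) = ((Real.exp (-π) : ℝ) : ℂ) := by
    push_cast; congr 1
    field_simp
  have e2 : Complex.exp (π * Complex.I * Complex.I) = ((Real.exp (-π) : ℝ) : ℂ) := by
    push_cast; congr 1
    rw [mul_assoc, Complex.I_mul_I]; ring
  rw [e1, e2, Complex.I_pow_four, ← Complex.ofReal_neg, PA_real, PB_real, one_mul] at h
  have h' : Real.exp (-π) ^ 2 * rA (Real.exp (-π)) ^ 8 = rB (-Real.exp (-π)) ^ 8 := by exact_mod_cast h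
  unfold thA thC
  rw [← h', mul_pow, ← Real.exp_nat_mul, ← Real.exp_nat_mul]
  congr 2; push_cast; ring

noncomputable def thW (s : ℝ) : ℝ := thC s ^ 4 - thA s ^ 4

lemma pow4_eq {a c : ℝ} (h : a ^ 8 = c ^ 8) : a ^ 4 = c ^ 4 := by
  have : (a ^ 4) ^ 2 = (c ^ 4) ^ 2 := by rw [← pow_mul, ← pow_mul]; exact h
  rwa [sq_eq_sq₀ (by positivity) (by positivity)] at this

lemma thW_pos {s : ℝ} (hs : s < -π) : 0 < thW s := by
  have hpi := Real.pi_pos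
  have hm : StrictMonoOn (fun s => thA s ^ 4 / thC s ^ 4) (Set.Iio 0) := by
    have hd : ∀ s < 0, HasDerivAt (fun s => thA s ^ 4 / thC s ^ 4)
        (thA s ^ 4 / thC s ^ 4 * (thA s ^ 4 + thC s ^ 4)) s := by
      intro s hs
      have c0 := thC_ne hs
      refine (((thA_der hs).pow 4).div ((thC_der hs).pow 4) (pow_ne_zero 4 c0)).congr_deriv ?_
      push_cast
      simp only [Pi.pow_apply]
      field_simp
      ring
    apply strictMonoOn_of_deriv_pos (convex_Iio 0)
    · intro t ht
      exact (hd t ht).continuousAt.continuousWithinAt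
    · intro t ht
      rw [interior_Iio] at ht
      rw [(hd t ht).deriv]
      have c0 := thC_ne ht
      have a0 := thA_pos ht
      positivity
  have h0 : s < 0 := by linarith
  have h1 := hm h0 (show -π < 0 by linarith) hs
  simp only at h1
  have c1 := thC_ne (show -π < 0 by linarith)
  rw [pow4_eq thAC_pi, div_self (by positivity)] at h1
  have c0 := thC_ne h0
  rw [div_lt_one (by positivity)] at h1
  unfold thW; linarith

noncomputable def thZ (s : ℝ) : ℝ := 4 * thA s ^ 4 * thC s ^ 4 / thB s ^ 8

lemma thZ_pos {s : ℝ} (hs : s < 0) : 0 < thZ s := by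
  have := thA_pos hs; have := thB_pos hs; have := thC_ne hs
  unfold thZ; positivity

lemma thZ_one {s : ℝ} (hs : s < 0) : thB s ^ 8 * (1 - thZ s) = thW s ^ 2 := by
  have hb := thB_pos hs
  unfold thZ thW
  have e : thB s ^ 8 = (thA s ^ 4 + thC s ^ 4) ^ 2 := by rw [← th_jac hs]; ring
  field_simp
  rw [e]; ring

lemma thZ_lt {s : ℝ} (hs : s < -π) : thZ s < 1 := by
  have h0 : s < 0 := by linarith [Real.pi_pos]
  have hb := thB_pos h0
  have h := thZ_one h0
  have hw := thW_pos hs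
  have : 0 < thB s ^ 8 * (1 - thZ s) := by rw [h]; positivity
  have := pos_of_mul_pos_right this (by positivity)
  linarith

lemma thZ_der {s : ℝ} (hs : s < 0) : HasDerivAt thZ (thZ s * thW s) s := by
  have hb := thB_pos hs
  refine ((((thA_der hs).pow 4).const_mul 4).mul ((thC_der hs).pow 4)).div ((thB_der hs).pow 8)
    (pow_ne_zero 8 hb.ne') |>.congr_deriv ?_
  push_cast
  simp only [Pi.pow_apply, Pi.mul_apply]
  unfold thZ thW
  field_simp
  ring

noncomputable def thR (s : ℝ) : ℝ := Real.log (thZ s)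

lemma thR_der {s : ℝ} (hs : s < 0) : HasDerivAt thR (thW s) s := by
  have := (thZ_der hs).log (thZ_pos hs).ne'
  refine this.congr_deriv ?_
  have := (thZ_pos hs).ne'
  field_simp

lemma thR_neg {s : ℝ} (hs : s < -π) : thR s < 0 :=
  Real.log_neg (thZ_pos (by linarith [Real.pi_pos])) (thZ_lt hs)

lemma thR_exp {s : ℝ} (hs : s < 0) : Real.exp (thR s) = thZ s := Real.exp_log (thZ_pos hs)

lemma thR_half {s : ℝ} (hs : s < 0) : Real.exp (1 / 2 * thR s) = 2 * thA s ^ 2 * thC s ^ 2 / thB s ^ 4 := by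
  have hb := thB_pos hs
  have ha := thA_pos hs
  rw [← sq_eq_sq₀ (Real.exp_pos _).le (by positivity), ← Real.exp_nat_mul,
    show ((2 : ℕ) : ℝ) * (1 / 2 * thR s) = thR s by push_cast; ring, thR_exp hs]
  unfold thZ
  field_simp
  ring

lemma thW_tend : Tendsto thW atBot (𝓝 1) := by
  have := (thC_tend.pow 4).sub (thA_tend.pow 4)
  rw [show (1 : ℝ) ^ 4 - 0 ^ 4 = 1 by norm_num] at this
  exact this

lemma thZ_tend : Tendsto thZ atBot (𝓝 0) := by
  have := (((thA_tend.pow 4).const_mul 4).mul (thC_tend.pow 4)).div (thB_tend.pow 8) (by norm_num)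
  rw [show 4 * (0 : ℝ) ^ 4 * 1 ^ 4 / 1 ^ 8 = 0 by norm_num] at this
  exact this

lemma thR_tend : Tendsto thR atBot atBot := by
  apply Real.tendsto_log_nhdsGT_zero.comp
  rw [tendsto_nhdsWithin_iff]
  refine ⟨thZ_tend, ?_⟩
  filter_upwards [eventually_lt_atBot 0] with s hs
  exact thZ_pos hs

lemma thW_der {s : ℝ} (hs : s < 0) :
    HasDerivAt thW (4 * thV s * thW s - 2 * thA s ^ 4 * thC s ^ 4) s := by
  refine (((thC_der hs).pow 4).sub ((thA_der hs).pow 4)).congr_deriv ?_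
  push_cast
  unfold thW
  ring

section
variable (x : ℝ)

noncomputable def f0 (s : ℝ) : ℝ := ser (hc x) x (thR s)
noncomputable def f1 (s : ℝ) : ℝ := ser (dc x (hc x)) x (thR s)
noncomputable def f2 (s : ℝ) : ℝ := ser (dc x (dc x (hc x))) x (thR s)
noncomputable def f3 (s : ℝ) : ℝ := ser (dc x (dc x (dc x (hc x)))) x (thR s)

noncomputable def y0 (s : ℝ) : ℝ := f0 x s / thB s ^ 4
noncomputable def y1 (s : ℝ) : ℝ := (thW s * f1 x s - 4 * thV s * f0 x s) / thB s ^ 4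
noncomputable def y2 (s : ℝ) : ℝ := (thW s ^ 2 * f2 x s -
  (2 * (thA s ^ 4 * thC s ^ 4) + 4 * thV s * thW s) * f1 x s +
  (8 * thV s ^ 2 - thA s ^ 4 * thC s ^ 4 / 2) * f0 x s) / thB s ^ 4

variable {x}

lemma f0_der (hx : 0 ≤ x) {s : ℝ} (hs : s < -π) : HasDerivAt (f0 x) (f1 x s * thW s) s :=
  (ser_der (hc_bd hx) hx (thR_neg hs)).comp s (thR_der (by linarith [Real.pi_pos]))

lemma f1_der (hx : 0 ≤ x) {s : ℝ} (hs : s < -π) : HasDerivAt (f1 x) (f2 x s * thW s) s :=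
  (ser_der (dc_bd (hc_bd hx) hx) hx (thR_neg hs)).comp s (thR_der (by linarith [Real.pi_pos]))

lemma f2_der (hx : 0 ≤ x) {s : ℝ} (hs : s < -π) : HasDerivAt (f2 x) (f3 x s * thW s) s :=
  (ser_der (dc_bd (dc_bd (hc_bd hx) hx) hx) hx (thR_neg hs)).comp s
    (thR_der (by linarith [Real.pi_pos]))

lemma y0_der (hx : 0 ≤ x) {s : ℝ} (hs : s < -π) : HasDerivAt (y0 x) (y1 x s) s := by
  have h0 : s < 0 := by linarith [Real.pi_pos]
  have hb := thB_pos h0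
  refine ((f0_der hx hs).div ((thB_der h0).pow 4) (pow_ne_zero 4 hb.ne')).congr_deriv ?_
  push_cast
  simp only [Pi.pow_apply]
  unfold y1
  field_simp

lemma y1_der (hx : 0 ≤ x) {s : ℝ} (hs : s < -π) : HasDerivAt (y1 x) (y2 x s) s := by
  have h0 : s < 0 := by linarith [Real.pi_pos]
  have hb := thB_pos h0
  refine ((((thW_der h0).mul (f1_der hx hs)).sub
    (((thV_der h0).const_mul 4).mul (f0_der hx hs))).div ((thB_der h0).pow 4)
    (pow_ne_zero 4 hb.ne')).congr_deriv ?_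
  push_cast
  simp only [Pi.pow_apply, Pi.mul_apply, Pi.sub_apply]
  unfold y2
  field_simp
  ring

lemma f3_eq (hx : 0 ≤ x) {s : ℝ} (hs : s < -π) : thW s ^ 2 * f3 x s =
    thB s ^ 8 * x ^ 3 * Real.exp (x * thR s) + 4 * (thA s ^ 4 * thC s ^ 4) *
      (3 / 2 * f2 x s + 3 / 4 * f1 x s + 1 / 8 * f0 x s) := by
  have h0 : s < 0 := by linarith [Real.pi_pos]
  have hb := thB_pos h0
  have h := hyp_ode hx (thR_neg hs)
  rw [thR_exp h0] at h
  change f3 x s = _ + _ * (f3 x s + 3 / 2 * f2 x s + 3 / 4 * f1 x s + 1 / 8 * f0 x s) at h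
  have e : thB s ^ 8 * thZ s = 4 * (thA s ^ 4 * thC s ^ 4) := by
    unfold thZ; field_simp
  rw [← thZ_one h0, ← e]
  linear_combination thB s ^ 8 * h

lemma y2_der (hx : 0 ≤ x) {s : ℝ} (hs : s < -π) : HasDerivAt (y2 x)
    (x ^ 3 * Real.exp (x * thR s) * thW s * thB s ^ 4) s := by
  have h0 : s < 0 := by linarith [Real.pi_pos]
  have hb := thB_pos h0
  have dP := ((thA_der h0).pow 4).mul ((thC_der h0).pow 4)
  have dW := thW_der h0
  have dV := thV_der h0
  have d := (((((dW.pow 2).mul (f2_der hx hs)).sub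
    (((dP.const_mul 2).add ((dV.const_mul 4).mul dW)).mul (f1_der hx hs))).add
    ((((dV.pow 2).const_mul 8).sub (dP.div_const 2)).mul (f0_der hx hs))).div ((thB_der h0).pow 4)
    (pow_ne_zero 4 hb.ne'))
  refine d.congr_deriv ?_
  push_cast
  simp only [Pi.pow_apply, Pi.mul_apply, Pi.sub_apply, Pi.add_apply]
  have k := f3_eq hx hs
  rw [div_eq_iff (by positivity)]
  have hw : thW s = thC s ^ 4 - thA s ^ 4 := rfl
  linear_combination thB s ^ 4 * thW s * k +
    thA s ^ 4 * thC s ^ 4 * thB s ^ 4 * (2 * f1 x s + f0 x s / 2) * hw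

lemma f0_tend0 : Tendsto (f0 0) atBot (𝓝 1) := by
  have := (ser_tend0 (hc_bd (le_refl (0 : ℝ)))).comp thR_tend
  rw [hc_zero] at this; exact this

lemma f1_tend (hx : 0 ≤ x) : Tendsto (f1 x) atBot (𝓝 0) := by
  rcases hx.eq_or_lt with rfl | h
  · have := (ser_tend0 (dc_bd (hc_bd hx) hx)).comp thR_tend
    rw [show ∀ c : ℕ → ℝ, dc 0 c 0 = 0 from fun c => by simp [dc]] at this
    exact this
  · exact (ser_tend (dc_bd (hc_bd hx) hx) h).comp thR_tend

lemma f2_tend (hx : 0 ≤ x) : Tendsto (f2 x) atBot (𝓝 0) := by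
  rcases hx.eq_or_lt with rfl | h
  · have := (ser_tend0 (dc_bd (dc_bd (hc_bd hx) hx) hx)).comp thR_tend
    rw [show ∀ c : ℕ → ℝ, dc 0 c 0 = 0 from fun c => by simp [dc]] at this
    exact this
  · exact (ser_tend (dc_bd (dc_bd (hc_bd hx) hx) hx) h).comp thR_tend

lemma y0_tend {l : ℝ} (h : Tendsto (f0 x) atBot (𝓝 l)) : Tendsto (y0 x) atBot (𝓝 l) := by
  have := h.div (thB_tend.pow 4) (by norm_num)
  rw [one_pow, div_one] at this
  exact this

lemma y1_tend (hx : 0 ≤ x) {l : ℝ} (h : Tendsto (f0 x) atBot (𝓝 l)) : Tendsto (y1 x) atBot (𝓝 0) := by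
  have := ((thW_tend.mul (f1_tend hx)).sub ((thV_tend.const_mul 4).mul h)).div (thB_tend.pow 4) (by norm_num)
  rw [show ((1 : ℝ) * 0 - 4 * 0 * l) / 1 ^ 4 = 0 by norm_num] at this
  exact this

lemma y2_tend (hx : 0 ≤ x) {l : ℝ} (h : Tendsto (f0 x) atBot (𝓝 l)) : Tendsto (y2 x) atBot (𝓝 0) := by
  have hP := (thA_tend.pow 4).mul (thC_tend.pow 4)
  have := ((((thW_tend.pow 2).mul (f2_tend hx)).sub (((hP.const_mul 2).add
    ((thV_tend.const_mul 4).mul thW_tend)).mul (f1_tend hx))).add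
    ((((thV_tend.pow 2).const_mul 8).sub (hP.div_const 2)).mul h)).div (thB_tend.pow 4) (by norm_num)
  rw [show (((1 : ℝ) ^ 2 * 0 - (2 * (0 ^ 4 * 1 ^ 4) + 4 * 0 * 1) * 0 + (8 * 0 ^ 2 - 0 ^ 4 * 1 ^ 4 / 2) * l) /
    1 ^ 4) = 0 by norm_num] at this
  exact this

end

lemma y0_zero {s : ℝ} (hs : s < -π) : y0 0 s = 1 := by
  have h := f0_tend0
  have e2 : ∀ s < -π, y2 0 s = 0 := fun s hs => const_of_der (s0 := -π)
    (fun t ht => (y2_der le_rfl ht).congr_deriv (by norm_num)) (y2_tend le_rfl h) hs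
  have e1 : ∀ s < -π, y1 0 s = 0 := fun s hs => const_of_der (s0 := -π)
    (fun t ht => (y1_der le_rfl ht).congr_deriv (e2 t ht)) (y1_tend le_rfl h) hs
  exact const_of_der (s0 := -π)
    (fun t ht => (y0_der le_rfl ht).congr_deriv (e1 t ht)) (y0_tend h) hs

noncomputable def gc (n : ℕ) : ℝ := 8 * (sigma3 (2 * n + 1) : ℝ) * (-1) ^ n / (2 * (n : ℝ) + 1) ^ 3

lemma sigma3_le (m : ℕ) : sigma3 m ≤ m ^ 4 := by
  unfold sigma3
  calc ∑ d ∈ m.divisors, d ^ 3 ≤ ∑ d ∈ m.divisors, m ^ 3 :=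
        Finset.sum_le_sum fun d hd => Nat.pow_le_pow_left (Nat.divisor_le hd) 3
    _ = m.divisors.card * m ^ 3 := by simp
    _ ≤ m * m ^ 3 := Nat.mul_le_mul_right _ (Nat.card_divisors_le_self m)
    _ = m ^ 4 := by ring

lemma gc_bd : PolyBd gc := by
  refine ⟨16, 1, fun n => ?_⟩
  unfold gc
  have hn : (0 : ℝ) < 2 * (n : ℝ) + 1 := by positivity
  rw [abs_div, abs_mul, abs_mul, abs_pow, abs_neg, abs_one, one_pow, mul_one,
    abs_of_pos (by positivity : (0 : ℝ) < (2 * (n : ℝ) + 1) ^ 3), div_le_iff₀ (by positivity)]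
  have h : (sigma3 (2 * n + 1) : ℝ) ≤ (2 * (n : ℝ) + 1) ^ 4 := by exact_mod_cast sigma3_le (2 * n + 1)
  rw [abs_of_pos (by norm_num : (0 : ℝ) < 8), abs_of_nonneg (by positivity)]
  have h3 : 0 < (2 * (n : ℝ) + 1) ^ 3 := by positivity
  nlinarith

noncomputable def g0 : ℝ → ℝ := ser gc (1 / 2)
noncomputable def g1 : ℝ → ℝ := ser (dc (1 / 2) gc) (1 / 2)
noncomputable def g2 : ℝ → ℝ := ser (dc (1 / 2) (dc (1 / 2) gc)) (1 / 2)

lemma half_nn : (0 : ℝ) ≤ 1 / 2 := by norm_num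
lemma half_p : (0 : ℝ) < 1 / 2 := by norm_num

lemma g2_der {s : ℝ} (hs : s < 0) : HasDerivAt g2 (thA s ^ 2 * thC s ^ 2 * thW s / 4) s := by
  refine (ser_der (dc_bd (dc_bd gc_bd half_nn) half_nn) half_nn hs).congr_deriv ?_
  have h := S_id hs
  have e : Complex.exp (s : ℂ) = ((Real.exp s : ℝ) : ℂ) := by push_cast; rfl
  rw [e, ← Complex.ofReal_neg, PA_real, PB_real] at h
  have h' : HasSum (fun n : ℕ => (sigma3 (2 * n + 1) : ℝ) * (-Real.exp s) ^ n)
    (rA (Real.exp s) ^ 2 * rB (-Real.exp s) ^ 2 * (rB (-Real.exp s) ^ 4 -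
      Real.exp s * rA (Real.exp s) ^ 4) / 4) := by
    rw [← Complex.hasSum_ofReal]
    push_cast
    push_cast at h
    exact h
  have h2 := (h'.mul_left (Real.exp (s / 2))).tsum_eq
  have e1 : thA s ^ 2 = Real.exp (s / 2) * rA (Real.exp s) ^ 2 := by
    unfold thA; rw [mul_pow, ← Real.exp_nat_mul]; congr 2; push_cast; ring
  have e2 : thA s ^ 4 = Real.exp s * rA (Real.exp s) ^ 4 := by
    unfold thA; rw [mul_pow, ← Real.exp_nat_mul]; congr 2; push_cast; ring
  unfold thW
  rw [e1, e2]
  unfold thC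
  refine Eq.trans (tsum_congr fun n => ?_) (h2.trans (by ring))
  unfold dc gc
  have e3 : Real.exp (((n : ℝ) + 1 / 2) * s) = Real.exp (s / 2) * Real.exp s ^ n := by
    rw [← Real.exp_nat_mul, ← Real.exp_add]; congr 1; ring
  have hn : (2 * (n : ℝ) + 1) ≠ 0 := by positivity
  rw [e3, show (n : ℝ) + 1 / 2 = (2 * n + 1) / 2 by ring, neg_pow (Real.exp s)]
  field_simp
  norm_num

lemma y0_half {s : ℝ} (hs : s < -π) : y0 (1 / 2) s = g0 s := by
  have neg : ∀ s < -π, s < 0 := fun s hs => by linarith [Real.pi_pos]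
  have h : Tendsto (f0 (1 / 2)) atBot (𝓝 0) := (ser_tend (hc_bd half_nn) half_p).comp thR_tend
  have b1 := dc_bd gc_bd half_nn
  have b2 := dc_bd b1 half_nn
  have e2 : ∀ s < -π, y2 (1 / 2) s - g2 s = 0 := fun s hs => const_of_der (s0 := -π)
    (h := fun s => y2 (1 / 2) s - g2 s)
    (fun t ht => ((y2_der half_nn ht).sub (g2_der (neg t ht))).congr_deriv (by
      have hb := thB_pos (neg t ht)
      rw [thR_half (neg t ht)]; field_simp; ring))
    (sub_zero (0 : ℝ) ▸ (y2_tend half_nn h).sub (ser_tend b2 half_p)) hs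
  have e1 : ∀ s < -π, y1 (1 / 2) s - g1 s = 0 := fun s hs => const_of_der (s0 := -π)
    (h := fun s => y1 (1 / 2) s - g1 s)
    (fun t ht => ((y1_der half_nn ht).sub (ser_der b1 half_nn (neg t ht))).congr_deriv (e2 t ht))
    (sub_zero (0 : ℝ) ▸ (y1_tend half_nn h).sub (ser_tend b1 half_p)) hs
  have e0 := const_of_der (s0 := -π) (h := fun s => y0 (1 / 2) s - g0 s)
    (fun t ht => ((y0_der half_nn ht).sub (ser_der gc_bd half_nn (neg t ht))).congr_deriv (e1 t ht))
    (sub_zero (0 : ℝ) ▸ (y0_tend h).sub (ser_tend gc_bd half_p)) hs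
  change y0 (1 / 2) s - g0 s = 0 at e0
  linarith

lemma theta3_eq (s : ℝ) : theta3 (Real.exp s) = thB s := by
  unfold theta3 thB rB
  apply tsum_congr; intro n
  have h : ((eB n : ℕ) : ℝ) = (n : ℝ) ^ 2 := by exact_mod_cast congrArg (Int.cast : ℤ → ℝ) (eB_cast n)
  rw [← Real.rpow_natCast _ (eB n), h]

lemma theta2_eq (s : ℝ) : theta2 (Real.exp s) = thA s := by
  unfold theta2 thA rA
  rw [← tsum_mul_left]
  apply tsum_congr; intro n
  have h : ((eA n : ℕ) : ℝ) = (n : ℝ) * (n + 1) := by exact_mod_cast congrArg (Int.cast : ℤ → ℝ) (eA_cast n)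
  rw [← Real.exp_mul, ← Real.exp_nat_mul, ← Real.exp_add, h]
  congr 1; ring

lemma z4_eq {s : ℝ} (hs : s < 0) : z4 (Real.exp s) = thZ s := by
  have hb := thB_pos hs
  unfold z4 modLambda thZ
  rw [theta2_eq, theta3_eq]
  have : thC s ^ 4 = thB s ^ 4 - thA s ^ 4 := by rw [th_jac hs]; ring
  rw [this]
  field_simp

lemma main {s : ℝ} (hs : s < -π) : (0 < z4 (Real.exp s) ∧ z4 (Real.exp s) < 1) ∧
    F4 (1 / 2) (z4 (Real.exp s)) = F4 0 (z4 (Real.exp s)) * (8 * Real.sqrt (Real.exp s) *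
      ∑' n : ℕ, (sigma3 (2 * n + 1) : ℝ) * (-Real.exp s) ^ n / (2 * (n : ℝ) + 1) ^ 3) := by
  have h0 : s < 0 := by linarith [Real.pi_pos]
  have hb := thB_pos h0
  have hz := thZ_pos h0
  rw [z4_eq h0]
  refine ⟨⟨hz, thZ_lt hs⟩, ?_⟩
  rw [F4_eq hz, F4_eq hz]
  have k0 := y0_zero hs
  have k1 := y0_half hs
  unfold y0 at k0 k1
  rw [div_eq_iff (by positivity)] at k0 k1
  change f0 (1 / 2) s = f0 0 s * _
  rw [k0, k1, one_mul, mul_comm]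
  congr 1
  unfold g0 ser gc
  rw [← tsum_mul_left]
  apply tsum_congr; intro n
  have e3 : Real.exp (((n : ℝ) + 1 / 2) * s) = Real.exp (s / 2) * Real.exp s ^ n := by
    rw [← Real.exp_nat_mul, ← Real.exp_add]; congr 1; ring
  rw [e3, ← Real.exp_half, neg_pow (Real.exp s)]
  ring

end TT

theorem stmt_4 :
    ∀ q ∈ Set.Ioo (0 : ℝ) (Real.exp (-π)),
      (0 < z4 q ∧ z4 q < 1) ∧
      F4 (1 / 2) (z4 q) =
        F4 0 (z4 q) * (8 * Real.sqrt q *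
          ∑' n : ℕ, (sigma3 (2 * n + 1) : ℝ) * (-q) ^ n / (2 * (n : ℝ) + 1) ^ 3) := by
  rintro q ⟨h1, h2⟩
  have h := TT.main (s := Real.log q) ((Real.log_lt_iff_lt_exp h1).mpr h2)
  rwa [Real.exp_log h1] at h
end

section
/- For every positive rational number r, setting t = e^{−π√r}, the following identity holds: (8√t/π) · [ ∑_{n=0}^∞ σ₃(2n+1) tⁿ/(2n+1)³ + (π√r/2) · ∑_{n=0}^∞ σ₃(2n+1) tⁿ/(2n+1)² ] = (r^{3/2}/π²) · [ (1/16)·S(1,0,r/16;2) − (9/16)·S(1,0,r/4;2) + (1/2)·S(1,0,r;2) ]. (This is the paper's Epstein-zeta evaluation of the level-4 Ramanujan series shifted by 1/2 at q = −e^{−π√r}, with the shifted series replaced by its q-series expression.) -/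
open Real

/-- The Epstein zeta value `S(A,B,C;2) = ∑_{(n,m)≠(0,0)} (An² + Bnm + Cm²)^{−2}`. -/
noncomputable def epstein2 (A B C : ℝ) : ℝ :=
  ∑' p : {p : ℤ × ℤ // p ≠ 0},
    ((A * ((p : ℤ × ℤ).1 : ℝ) ^ 2 + B * ((p : ℤ × ℤ).1 : ℝ) * ((p : ℤ × ℤ).2 : ℝ) +
        C * ((p : ℤ × ℤ).2 : ℝ) ^ 2) ^ 2)⁻¹


noncomputable def ee (a : ℝ) (k : ℕ) : ℝ :=
  (π / a ^ 3 + 2 * π ^ 2 * k / a ^ 2) * Real.exp (-2 * π * a) ^ k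

lemma rexp_lt (a : ℝ) (ha : 0 < a) : Real.exp (-2 * π * a) < 1 := by
  rw [Real.exp_lt_one_iff]
  have := mul_pos pi_pos ha
  linarith

lemma sum0 (a : ℝ) (ha : 0 < a) : Summable (fun k : ℕ => Real.exp (-2 * π * a) ^ k) :=
  summable_geometric_of_lt_one (Real.exp_pos _).le (rexp_lt a ha)

lemma sum1 (a : ℝ) (ha : 0 < a) : Summable (fun k : ℕ => (k : ℝ) * Real.exp (-2 * π * a) ^ k) := by
  have := summable_pow_mul_geometric_of_norm_lt_one 1 (r := Real.exp (-2 * π * a))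
    (by rw [Real.norm_of_nonneg (Real.exp_pos _).le]; exact rexp_lt a ha)
  simpa using this

lemma cexp_eq (a : ℝ) : Complex.exp (2 * π * Complex.I * (Complex.I * a)) =
    ((Real.exp (-2 * π * a) : ℝ) : ℂ) := by
  rw [Complex.ofReal_exp]
  congr 1
  push_cast
  linear_combination (2 * π * a : ℂ) * Complex.I_mul_I

lemma hasSumA (a : ℝ) (ha : 0 < a) :
    HasSum (fun n : ℤ => ((n : ℝ) ^ 2 + a ^ 2)⁻¹)
      ((2 * π * (∑' k : ℕ, Real.exp (-2 * π * a) ^ k) - π) / a) := by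
  have hx : (Complex.I * a) ∈ Complex.integerComplement := by
    rw [Complex.mem_integerComplement_iff]
    rintro ⟨n, hn⟩
    have := congrArg Complex.im hn
    simp at this
    exact ha.ne this
  have haC : (a : ℂ) ≠ 0 := by exact_mod_cast ha.ne'
  have h1 := (summable_cotTerm hx).hasSum
  have h2 : (∑' n : ℕ, cotTerm (Complex.I * a) n) = π * Complex.cot (π * (Complex.I * a)) - 1 / (Complex.I * a) :=
    (cot_series_rep' hx).symm
  have h3 := pi_mul_cot_pi_q_exp ⟨Complex.I * a, by simpa using ha⟩
  simp only at h3
  rw [cexp_eq] at h3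
  rw [h2, h3] at h1
  have h4 : HasSum (fun n : ℕ => ((((n + 1 : ℝ) ^ 2 + a ^ 2)⁻¹ : ℝ) : ℂ))
     (((2 * π * (∑' k : ℕ, Real.exp (-2 * π * a) ^ k) - π - 1 / a) / (2 * a) : ℝ) : ℂ) := by
    have := h1.mul_left (-(2 * Complex.I * a)⁻¹)
    convert! this using 1
    · ext n
      rw [cotTerm_identity hx]
      have e0 : ((n + 1 : ℝ) ^ 2 + a ^ 2) ≠ 0 := by positivity
      have e1 : ((n + 1 : ℂ) ^ 2 + a ^ 2) ≠ 0 := by exact_mod_cast e0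
      have e2 : (Complex.I * a + (n + 1)) * (Complex.I * a - (n + 1)) = - ((n + 1 : ℂ) ^ 2 + a ^ 2) := by
        linear_combination (a : ℂ) ^ 2 * Complex.I_mul_I
      rw [e2]
      push_cast
      field_simp
    · push_cast
      field_simp
      ring_nf
      simp [Complex.I_sq]
      try ring
  rw [Complex.hasSum_ofReal] at h4
  have := HasSum.of_add_one_of_neg_add_one (f := fun n : ℤ => ((n : ℝ) ^ 2 + a ^ 2)⁻¹)
    (by simpa using h4) (by simpa [neg_add_eq_sub, ← sub_eq_add_neg, ← neg_add', -neg_add_rev] using h4)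
  convert! this using 1
  field_simp
  simp
  field_simp
  ring

lemma hasSumB (a : ℝ) (ha : 0 < a) :
    HasSum (fun n : ℤ => ((n : ℝ) ^ 2 - a ^ 2) / ((n : ℝ) ^ 2 + a ^ 2) ^ 2)
      (-4 * π ^ 2 * (∑' k : ℕ, k * Real.exp (-2 * π * a) ^ k)) := by
  have h := EisensteinSeries.qExpansion_identity (k := 1) le_rfl ⟨Complex.I * a, by simpa using ha⟩
  simp only at h
  rw [cexp_eq] at h
  have hs : Summable (fun n : ℤ => 1 / (Complex.I * a + n) ^ (1 + 1)) := by
    have := EisensteinSeries.linear_right_summable (Complex.I * a) 1 (k := 2) (by norm_num)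
    refine this.congr fun n => ?_
    simp
  have h1 := hs.hasSum
  rw [h] at h1
  have h2 := Complex.hasSum_re h1
  convert! h2 using 1
  · ext n
    have e0 : ((n : ℝ) ^ 2 + a ^ 2) ≠ 0 := by positivity
    have e : 1 / (Complex.I * a + n) ^ (1 + 1) = (((n : ℝ) ^ 2 - a ^ 2) / ((n : ℝ) ^ 2 + a ^ 2) ^ 2 : ℝ) 
       + ((- 2 * a * n / ((n : ℝ) ^ 2 + a ^ 2) ^ 2 : ℝ) : ℂ) * Complex.I := by
      have e1 : ((n : ℂ) ^ 2 + a ^ 2) ≠ 0 := by exact_mod_cast e0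
      have e2 : (Complex.I * a + n) ≠ 0 := by
        intro h0
        apply e1
        linear_combination (n - Complex.I * a) * h0 + (a : ℂ) ^ 2 * Complex.I_mul_I
      push_cast
      field_simp
      linear_combination (a : ℂ) ^ 2 * (2 * ((n : ℂ) ^ 2 - Complex.I ^ 2 * a ^ 2) + a ^ 2 * (1 + Complex.I ^ 2) + (Complex.I * a + n) ^ 2) * Complex.I_sq
    rw [e, Complex.add_re, Complex.re_ofReal_mul, Complex.ofReal_re, Complex.I_re, mul_zero, add_zero]
  · have : (((-2 * π * Complex.I) ^ (1 + 1) / (Nat.factorial 1 : ℂ)) * ∑' n : ℕ, (n : ℂ) ^ 1 * ((Real.exp (-2 * π * a) : ℝ) : ℂ) ^ n)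
        = ((-4 * π ^ 2 * (∑' k : ℕ, k * Real.exp (-2 * π * a) ^ k) : ℝ) : ℂ) := by
      push_cast
      rw [mul_pow, Complex.I_sq]
      simp only [pow_one, Nat.factorial_one, Nat.cast_one]
      ring
    rw [this, Complex.ofReal_re]

lemma sum_ee (a : ℝ) (ha : 0 < a) : Summable (ee a) := by
  have := ((sum0 a ha).mul_left (π / a ^ 3)).add ((sum1 a ha).mul_left (2 * π ^ 2 / a ^ 2))
  refine this.congr fun k => ?_
  simp only [ee]; ring

lemma tsum_ee (a : ℝ) (ha : 0 < a) : ∑' k, ee a k = π / a ^ 3 * ∑' k : ℕ, Real.exp (-2 * π * a) ^ k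
    + 2 * π ^ 2 / a ^ 2 * ∑' k : ℕ, (k : ℝ) * Real.exp (-2 * π * a) ^ k := by
  rw [← tsum_mul_left, ← tsum_mul_left, ← ((sum0 a ha).mul_left (π / a ^ 3)).tsum_add ((sum1 a ha).mul_left (2 * π ^ 2 / a ^ 2))]
  refine tsum_congr fun k => ?_
  simp only [ee]; ring

lemma hasSumE (a : ℝ) (ha : 0 < a) :
    HasSum (fun n : ℤ => (((n : ℝ) ^ 2 + a ^ 2) ^ 2)⁻¹) (∑' k, ee a k - π / (2 * a ^ 3)) := by
  have := ((hasSumA a ha).sub (hasSumB a ha)).mul_left (1 / (2 * a ^ 2))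
  convert! this using 1
  · ext n
    have e0 : ((n : ℝ) ^ 2 + a ^ 2) ≠ 0 := by positivity
    field_simp
    ring
  · rw [tsum_ee a ha]
    field_simp
    ring

lemma ee_nonneg (a : ℝ) (ha : 0 ≤ a) (k : ℕ) : 0 ≤ ee a k := by
  unfold ee; positivity

lemma ee_le (s : ℝ) (hs : 0 < s) (m k : ℕ) : ee (m * s) k ≤ (1 / (m : ℝ) ^ 2) * ee s k := by
  rcases Nat.eq_zero_or_pos m with rfl | hm
  · simp [ee]
  have hm1 : (1 : ℝ) ≤ m := by exact_mod_cast hm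
  unfold ee
  have h1 : Real.exp (-2 * π * (m * s)) ≤ Real.exp (-2 * π * s) := by
    apply Real.exp_le_exp.mpr
    have : 0 < π * s := by positivity
    nlinarith
  have h2 : π / (m * s) ^ 3 ≤ 1 / (m : ℝ) ^ 2 * (π / s ^ 3) := by
    have : 1 / (m : ℝ) ^ 2 * (π / s ^ 3) = π / (m ^ 2 * s ^ 3) := by field_simp
    rw [this, mul_pow]
    gcongr
    norm_num
  have h3 : 2 * π ^ 2 * k / (m * s) ^ 2 = 1 / (m : ℝ) ^ 2 * (2 * π ^ 2 * k / s ^ 2) := by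
    field_simp
  have h4 : π / (m * s) ^ 3 + 2 * π ^ 2 * k / (m * s) ^ 2 ≤ 1 / (m : ℝ) ^ 2 * (π / s ^ 3 + 2 * π ^ 2 * k / s ^ 2) := by
    rw [h3, mul_add]; linarith
  rw [← mul_assoc (1 / (m : ℝ) ^ 2)]
  exact mul_le_mul h4 (pow_le_pow_left₀ (Real.exp_pos _).le h1 k) (by positivity) (by positivity)

lemma sum_D (s : ℝ) (hs : 0 < s) : Summable (fun p : ℕ × ℕ => ee (p.1 * s) p.2) := by
  have h : Summable (fun m : ℕ => 1 / (m : ℝ) ^ 2) := Real.summable_one_div_nat_pow.mpr (by norm_num)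
  have := h.mul_of_nonneg (sum_ee s hs) (fun m => by positivity) (fun k => ee_nonneg s hs.le k)
  exact this.of_nonneg_of_le (fun p => ee_nonneg _ (by positivity) _) (fun p => ee_le s hs p.1 p.2)

noncomputable def DD (s : ℝ) : ℝ := ∑' p : ℕ × ℕ, ee (p.1 * s) p.2

lemma epstein_eq (s : ℝ) (hs : 0 < s) : epstein2 1 0 (s ^ 2) =
    (∑' n : ℤ, (((n : ℝ) ^ 2) ^ 2)⁻¹) + 2 * DD s - π / s ^ 3 * ∑' m : ℕ, 1 / (m : ℝ) ^ 3 := by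
  set F : ℤ → ℝ := fun m => ∑' n : ℤ, (((n : ℝ) ^ 2 + (m * s) ^ 2) ^ 2)⁻¹ with hF
  have hFn : ∀ m : ℕ, F (m + 1) = ∑' k, ee ((m + 1 : ℕ) * s) k - π / (2 * ((m + 1 : ℕ) * s) ^ 3) := by
    intro m
    have := (hasSumE ((m + 1 : ℕ) * s) (by positivity)).tsum_eq
    rw [← this]
    simp [hF]
  have hFneg : ∀ m : ℤ, F (-m) = F m := by
    intro m; simp [hF]
  have hDs := (sum_D s hs).hasSum.prod_fiberwise (fun m => ((sum_D s hs).prod_factor m).hasSum)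
  have hZ : HasSum (fun m : ℕ => 1 / (m : ℝ) ^ 3) (∑' m : ℕ, 1 / (m : ℝ) ^ 3) :=
    (Real.summable_one_div_nat_pow.mpr (by norm_num)).hasSum
  have hV := hDs.sub (hZ.mul_left (π / (2 * s ^ 3)))
  rw [← hasSum_nat_add_iff' 1] at hV
  have h0 : ∀ k, ee 0 k = 0 := fun k => by simp [ee]
  simp only [Finset.range_one, Finset.sum_singleton, Nat.cast_zero, zero_mul, h0, tsum_zero] at hV
  norm_num at hV
  have hV' : HasSum (fun m : ℕ => F (m + 1)) (DD s - π / (2 * s ^ 3) * ∑' m : ℕ, 1 / (m : ℝ) ^ 3) := by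
    convert! hV using 1
    · ext m
      rw [hFn]
      push_cast
      congr 1
      field_simp
    · simp [DD]
  have hFS := HasSum.of_add_one_of_neg_add_one (f := F) hV' (by simpa only [hFneg] using hV')
  have hgs : Summable (fun p : ℤ × ℤ => (((p.2 : ℝ) ^ 2 + (p.1 * s) ^ 2) ^ 2)⁻¹) := by
    rw [summable_prod_of_nonneg (fun p => by positivity)]
    refine ⟨fun m => ?_, hFS.summable⟩
    by_cases hm : m = 0
    · subst hm
      have := Real.summable_one_div_int_pow (p := 4).mpr (by norm_num)
      refine this.congr fun n => ?_
      simp [← pow_mul]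
    · have h := (hasSumE (|(m : ℝ)| * s) (by positivity)).summable
      refine h.congr fun n => ?_
      simp [mul_pow]
  have hep : epstein2 1 0 (s ^ 2) = ∑' p : ℤ × ℤ, (((p.1 : ℝ) ^ 2 + (p.2 * s) ^ 2) ^ 2)⁻¹ := by
    unfold epstein2
    rw [← tsum_subtype_eq_of_support_subset (s := {p : ℤ × ℤ | p ≠ 0})]
    · apply tsum_congr
      intro p
      congr 2
      ring
    · intro p hp hp0
      apply hp
      simp [hp0]
  rw [hep, ← (Equiv.prodComm ℤ ℤ).tsum_eq]
  simp only [Equiv.prodComm_apply, Prod.fst_swap, Prod.snd_swap]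
  rw [hgs.tsum_prod]
  change ∑' m, F m = _
  rw [hFS.tsum_eq]
  simp only [hF]
  simp
  field_simp
  ring

lemma split1 (f : ℕ × ℕ → ℝ) (hf : Summable f) :
    ∑' p, f p = ∑' p : ℕ × ℕ, f (2 * p.1, p.2) + ∑' p : ℕ × ℕ, f (2 * p.1 + 1, p.2) := by
  have i1 : Function.Injective (fun p : ℕ × ℕ => (2 * p.1, p.2)) := by
    rintro ⟨a, b⟩ ⟨c, d⟩ h; simp at h; simp [h]
  have i2 : Function.Injective (fun p : ℕ × ℕ => (2 * p.1 + 1, p.2)) := by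
    rintro ⟨a, b⟩ ⟨c, d⟩ h; simp at h; simp [h]
  have s1 := hf.comp_injective i1
  have s2 := hf.comp_injective i2
  have e1 := s1.tsum_prod
  have e2 := s2.tsum_prod
  simp only [Function.comp_def] at e1 e2
  rw [hf.tsum_prod, e1, e2]
  exact (tsum_even_add_odd (f := fun m => ∑' k, f (m, k)) s1.prod s2.prod).symm

lemma split2 (f : ℕ × ℕ → ℝ) (hf : Summable f) :
    ∑' p, f p = ∑' p : ℕ × ℕ, f (p.1, 2 * p.2) + ∑' p : ℕ × ℕ, f (p.1, 2 * p.2 + 1) := by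
  have := split1 (fun p => f p.swap) ((Equiv.prodComm ℕ ℕ).summable_iff.mpr hf)
  rw [← (Equiv.prodComm ℕ ℕ).tsum_eq, ← (Equiv.prodComm ℕ ℕ).tsum_eq (fun p : ℕ × ℕ => f (p.1, 2 * p.2)),
    ← (Equiv.prodComm ℕ ℕ).tsum_eq (fun p : ℕ × ℕ => f (p.1, 2 * p.2 + 1))]
  simpa using this

lemma ee_double (a : ℝ) (k : ℕ) : ee a (2 * k) = 8 * ee (2 * a) k := by
  unfold ee
  have : Real.exp (-2 * π * (2 * a)) = Real.exp (-2 * π * a) ^ 2 := by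
    rw [← Real.exp_nat_mul]; congr 1; push_cast; ring
  rw [this, ← pow_mul]
  by_cases ha : a = 0
  · subst ha; simp
  push_cast
  field_simp
  ring

lemma odd_odd (s : ℝ) (hs : 0 < s) : ∑' p : ℕ × ℕ, ee ((2 * p.1 + 1 : ℕ) * s) (2 * p.2 + 1) =
    DD s - 9 * DD (2 * s) + 8 * DD (4 * s) := by
  have i2 : Function.Injective (fun p : ℕ × ℕ => (2 * p.1 + 1, p.2)) := by
    rintro ⟨a, b⟩ ⟨c, d⟩ h; simp at h; simp [h]
  have a1 := split1 _ (sum_D s hs)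
  have a2 := split2 _ ((sum_D s hs).comp_injective i2)
  have a3 := split1 _ (sum_D (2 * s) (by positivity))
  simp only [Function.comp_def] at a1 a2 a3
  have b1 : ∑' p : ℕ × ℕ, ee ((2 * p.1 : ℕ) * s) p.2 = DD (2 * s) := by
    unfold DD; congr 1; ext p; congr 1; push_cast; ring
  have b2 : ∑' p : ℕ × ℕ, ee ((2 * p.1 : ℕ) * (2 * s)) p.2 = DD (4 * s) := by
    unfold DD; congr 1; ext p; congr 1; push_cast; ring
  have b3 : ∑' p : ℕ × ℕ, ee ((2 * p.1 + 1 : ℕ) * s) (2 * p.2) =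
      8 * ∑' p : ℕ × ℕ, ee ((2 * p.1 + 1 : ℕ) * (2 * s)) p.2 := by
    rw [← tsum_mul_left]; congr 1; ext p; rw [ee_double]; congr 2; ring
  rw [b1] at a1
  rw [b3] at a2
  rw [b2] at a3
  unfold DD at *
  linarith

def gmap (p : ℕ × ℕ) : Σ n : ℕ, (2 * n + 1).divisors :=
  ⟨2 * p.1 * p.2 + p.1 + p.2, 2 * p.1 + 1, by
    rw [Nat.mem_divisors]
    exact ⟨⟨2 * p.2 + 1, by ring⟩, by omega⟩⟩

lemma gmap_bij : Function.Bijective gmap := by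
  constructor
  · rintro ⟨a, b⟩ ⟨c, d⟩ h
    have h1 : 2 * a * b + a + b = 2 * c * d + c + d := congrArg Sigma.fst h
    have h2 : 2 * a + 1 = 2 * c + 1 := congrArg (fun x => (x.2 : ℕ)) h
    have h3 : a = c := by omega
    subst h3
    have h4 : (2 * a + 1) * b = (2 * a + 1) * d := by linarith
    have h5 := Nat.eq_of_mul_eq_mul_left (by omega) h4
    rw [h5]
  · rintro ⟨n, d, hd⟩
    obtain ⟨⟨c, hc⟩, -⟩ := Nat.mem_divisors.mp hd
    have ho : Odd (d * c) := hc ▸ odd_two_mul_add_one n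
    obtain ⟨⟨a, rfl⟩, ⟨b, rfl⟩⟩ := Nat.odd_mul.mp ho
    have : n = 2 * a * b + a + b := by
      have : 2 * n + 1 = 2 * (2 * a * b + a + b) + 1 := by rw [hc]; ring
      omega
    subst this
    exact ⟨(a, b), rfl⟩

lemma sig_eq (N : ℕ) (hN : N ≠ 0) : ∑ d ∈ N.divisors, 1 / (d : ℝ) ^ 3 = sigma3 N / (N : ℝ) ^ 3 := by
  have hN' : (N : ℝ) ≠ 0 := by exact_mod_cast hN
  rw [← Nat.sum_div_divisors N (fun d => 1 / (d : ℝ) ^ 3), sigma3, Nat.cast_sum, Finset.sum_div]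
  refine Finset.sum_congr rfl fun d hd => ?_
  have h := (Nat.mem_divisors.mp hd).1
  have hd0 : (d : ℝ) ≠ 0 := by
    have := Nat.pos_of_mem_divisors hd
    positivity
  rw [Nat.cast_div h hd0]
  push_cast
  field_simp

lemma hasSum_odd (s : ℝ) (hs : 0 < s) :
    HasSum (fun n : ℕ => (π / s ^ 3 + 2 * π ^ 2 * (2 * n + 1) / s ^ 2) *
      (sigma3 (2 * n + 1) / (2 * (n : ℝ) + 1) ^ 3) * Real.exp (-2 * π * s) ^ (2 * n + 1))
      (DD s - 9 * DD (2 * s) + 8 * DD (4 * s)) := by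
  rw [← odd_odd s hs]
  have i : Function.Injective (fun p : ℕ × ℕ => (2 * p.1 + 1, 2 * p.2 + 1)) := by
    rintro ⟨a, b⟩ ⟨c, d⟩ h; simp at h; simp [h]
  have h1 := ((sum_D s hs).comp_injective i).hasSum
  let h : (Σ n : ℕ, (2 * n + 1).divisors) → ℝ := fun x =>
    (π / s ^ 3 + 2 * π ^ 2 * (2 * x.1 + 1) / s ^ 2) * Real.exp (-2 * π * s) ^ (2 * x.1 + 1) *
      (1 / ((x.2 : ℕ) : ℝ) ^ 3)
  have h2 : ((fun p : ℕ × ℕ => ee (p.1 * s) p.2) ∘ fun p : ℕ × ℕ => (2 * p.1 + 1, 2 * p.2 + 1))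
      = h ∘ Equiv.ofBijective gmap gmap_bij := by
    ext p
    simp only [Function.comp, Equiv.ofBijective_apply, h, gmap, ee]
    have : Real.exp (-2 * π * ((2 * p.1 + 1 : ℕ) * s)) = Real.exp (-2 * π * s) ^ (2 * p.1 + 1) := by
      rw [← Real.exp_nat_mul]; congr 1; ring
    rw [this, ← pow_mul]
    have e : (2 * p.1 + 1) * (2 * p.2 + 1) = 2 * (2 * p.1 * p.2 + p.1 + p.2) + 1 := by ring
    rw [e]
    push_cast
    field_simp
    ring
  rw [h2] at h1
  have h3 := (Equiv.hasSum_iff _).mp h1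
  have h4 := h3.sigma (fun n => hasSum_fintype _)
  rw [← h2] at h4
  convert! h4 using 1
  ext n
  have := sig_eq (2 * n + 1) (by omega)
  push_cast at this
  rw [← this]
  simp only [h]
  rw [← Finset.mul_sum, Finset.sum_coe_sort (2 * n + 1).divisors (fun d => 1 / (d : ℝ) ^ 3)]
  ring

theorem stmt_6 (r : ℚ) (hr : 0 < r) :
    (8 * Real.sqrt (Real.exp (-π * Real.sqrt (r : ℝ))) / π) *
      ((∑' n : ℕ, (sigma3 (2 * n + 1) : ℝ) * Real.exp (-π * Real.sqrt (r : ℝ)) ^ n /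
          (2 * (n : ℝ) + 1) ^ 3) +
        (π * Real.sqrt (r : ℝ) / 2) *
          ∑' n : ℕ, (sigma3 (2 * n + 1) : ℝ) * Real.exp (-π * Real.sqrt (r : ℝ)) ^ n /
            (2 * (n : ℝ) + 1) ^ 2) =
      ((r : ℝ) ^ ((3 : ℝ) / 2) / π ^ 2) *
        ((1 / 16) * epstein2 1 0 ((r : ℝ) / 16) - (9 / 16) * epstein2 1 0 ((r : ℝ) / 4) +
          (1 / 2) * epstein2 1 0 (r : ℝ)) := by
  have hr' : (0 : ℝ) < r := by exact_mod_cast hr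
  obtain ⟨s, hs, hrs⟩ : ∃ s : ℝ, 0 < s ∧ (r : ℝ) = (4 * s) ^ 2 := by
    refine ⟨√(r : ℝ) / 4, by positivity, ?_⟩
    rw [mul_div_cancel₀ _ (by norm_num), Real.sq_sqrt hr'.le]
  rw [hrs]
  have h4s : (0 : ℝ) ≤ 4 * s := by positivity
  have hpow : ((4 * s) ^ 2 : ℝ) ^ ((3 : ℝ) / 2) = 64 * s ^ 3 := by
    rw [← Real.rpow_natCast, ← Real.rpow_mul h4s]
    norm_num
    norm_cast
    ring
  rw [hpow, Real.sqrt_sq h4s, show ((4 * s) ^ 2 / 16 : ℝ) = s ^ 2 by ring,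
    show ((4 * s) ^ 2 / 4 : ℝ) = (2 * s) ^ 2 by ring,
    epstein_eq s hs, epstein_eq (2 * s) (by positivity), epstein_eq (4 * s) (by positivity)]
  have ht : Real.exp (-π * (4 * s)) = Real.exp (-2 * π * s) ^ 2 := by
    rw [← Real.exp_nat_mul]; congr 1; push_cast; ring
  rw [ht, Real.sqrt_sq (Real.exp_pos _).le]
  have hS := hasSum_odd s hs
  set u := Real.exp (-2 * π * s) with hu
  have hu0 : 0 < u := Real.exp_pos _
  set O := DD s - 9 * DD (2 * s) + 8 * DD (4 * s) with hO
  have s1 : Summable (fun n : ℕ => (sigma3 (2 * n + 1) : ℝ) * (u ^ 2) ^ n / (2 * (n : ℝ) + 1) ^ 3) := by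
    refine (hS.summable.mul_left (s ^ 3 / (π * u))).of_nonneg_of_le (fun n => by positivity) fun n => ?_
    have : (s ^ 3 / (π * u)) * ((π / s ^ 3 + 2 * π ^ 2 * (2 * n + 1) / s ^ 2) *
      (sigma3 (2 * n + 1) / (2 * (n : ℝ) + 1) ^ 3) * u ^ (2 * n + 1)) = 
      (sigma3 (2 * n + 1) : ℝ) * (u ^ 2) ^ n / (2 * (n : ℝ) + 1) ^ 3 + 
      2 * π * s * ((sigma3 (2 * n + 1) : ℝ) * (u ^ 2) ^ n / (2 * (n : ℝ) + 1) ^ 2) := by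
      rw [pow_succ u, pow_mul]
      field_simp
    rw [this]
    have : 0 ≤ 2 * π * s * ((sigma3 (2 * n + 1) : ℝ) * (u ^ 2) ^ n / (2 * (n : ℝ) + 1) ^ 2) := by positivity
    linarith
  have s2 : Summable (fun n : ℕ => (sigma3 (2 * n + 1) : ℝ) * (u ^ 2) ^ n / (2 * (n : ℝ) + 1) ^ 2) := by
    have := (hS.summable.sub (s1.mul_left (π * u / s ^ 3))).mul_left (s ^ 2 / (2 * π ^ 2 * u))
    refine this.congr fun n => ?_
    rw [pow_succ u, pow_mul]
    field_simp
    ring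
  have key : O = π * u / s ^ 3 * (∑' n : ℕ, (sigma3 (2 * n + 1) : ℝ) * (u ^ 2) ^ n / (2 * (n : ℝ) + 1) ^ 3)
     + 2 * π ^ 2 * u / s ^ 2 * ∑' n : ℕ, (sigma3 (2 * n + 1) : ℝ) * (u ^ 2) ^ n / (2 * (n : ℝ) + 1) ^ 2 := by
    refine hS.unique ?_
    convert! (s1.hasSum.mul_left (π * u / s ^ 3)).add (s2.hasSum.mul_left (2 * π ^ 2 * u / s ^ 2)) using 1
    ext n
    rw [pow_succ u, pow_mul]
    field_simp
  set Φ := ∑' n : ℕ, (sigma3 (2 * n + 1) : ℝ) * (u ^ 2) ^ n / (2 * (n : ℝ) + 1) ^ 3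
  set Ψ := ∑' n : ℕ, (sigma3 (2 * n + 1) : ℝ) * (u ^ 2) ^ n / (2 * (n : ℝ) + 1) ^ 2
  have lhs : 8 * u / π * (Φ + π * (4 * s) / 2 * Ψ) = 8 * s ^ 3 / π ^ 2 * O := by
    rw [key]
    field_simp
    ring
  rw [lhs, hO]
  field_simp
  ring
end

section
/- ∑_{n=0}^∞ (−1)ⁿ · ((1)_n)³/((3/2)_n)³ · (2 + 3n)/8ⁿ = 2G, where G is Catalan's constant. -/
open Real

/-- Catalan's constant `G = ∑_{n=0}^∞ (−1)ⁿ/(2n+1)²`. -/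
noncomputable def catalanConst : ℝ := ∑' n : ℕ, (-1 : ℝ) ^ n / (2 * (n : ℝ) + 1) ^ 2

lemma wz_aux (F G : ℕ → ℕ → ℝ) (c b : ℕ → ℝ)
    (h : ∀ n k, F (n+1) k - F n k = G n (k+1) - G n k)
    (hG : ∀ n k, |G n k| ≤ c k * b n) (hF : ∀ n k, |F n k| ≤ |G n k|)
    (hb : Summable b) (hc : Filter.Tendsto c Filter.atTop (nhds 0)) :
    Filter.Tendsto (fun K => ∑ k ∈ Finset.range K, F 0 k) Filter.atTop
      (nhds (∑' n, G n 0)) := by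
  have hs : ∀ k, Summable (fun n => G n k) := fun k =>
    Summable.of_abs (Summable.of_nonneg_of_le (fun n => abs_nonneg _) (fun n => hG n k)
      (hb.mul_left (c k)))
  have hF0 : ∀ k, Filter.Tendsto (fun n => F n k) Filter.atTop (nhds 0) := fun k =>
    squeeze_zero_norm (fun n => by simpa using hF n k)
      (by simpa using (hs k).tendsto_atTop_zero.abs)
  have step : ∀ k, ∑' n, G n (k+1) - ∑' n, G n k = - F 0 k := by
    intro k
    rw [← (hs (k+1)).tsum_sub (hs k)]
    have h1 : Summable (fun n => G n (k+1) - G n k) := (hs (k+1)).sub (hs k)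
    have h2 := h1.hasSum.tendsto_sum_nat
    have h3 : (fun N => ∑ n ∈ Finset.range N, (G n (k+1) - G n k)) = fun N => F N k - F 0 k := by
      funext N
      rw [← Finset.sum_range_sub (fun n => F n k)]
      exact Finset.sum_congr rfl fun n _ => (h n k).symm
    rw [h3] at h2
    have h4 := (hF0 k).sub_const (F 0 k)
    have := tendsto_nhds_unique h2 h4
    simpa using this
  have tot : ∀ K, ∑ k ∈ Finset.range K, F 0 k = ∑' n, G n 0 - ∑' n, G n K := by
    intro K
    induction K with
    | zero => simp
    | succ K ih => rw [Finset.sum_range_succ, ih]; linarith [step K]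
  have hlim : Filter.Tendsto (fun K => ∑' n, G n K) Filter.atTop (nhds 0) := by
    have h5 : Filter.Tendsto (fun K => c K * ∑' n, b n) Filter.atTop (nhds 0) := by
      simpa using hc.mul_const (∑' n, b n)
    refine squeeze_zero_norm (fun K => ?_) h5
    rw [← tsum_mul_left]
    exact tsum_of_norm_bounded (hb.mul_left (c K)).hasSum (fun n => by simpa using hG n K)
  simp_rw [tot]
  simpa using hlim.const_sub (∑' n, G n 0)

noncomputable def pp (n : ℕ) : ℝ := (ascPochhammer ℝ n).eval (3 / 2 : ℝ)

lemma pp_zero : pp 0 = 1 := by simp [pp]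
lemma pp_succ (n : ℕ) : pp (n+1) = pp n * (3/2 + n) := by
  simp [pp, ascPochhammer_succ_right]
lemma pp_pos (n : ℕ) : 0 < pp n := ascPochhammer_pos n _ (by norm_num)

lemma lim_of_sq (c : ℕ → ℝ) (A : ℝ) (h0 : ∀ k, 0 ≤ c k) (h : ∀ k : ℕ, c k ^ 2 * (k + 1) ≤ A) :
    Filter.Tendsto c Filter.atTop (nhds 0) := by
  have h1 : Filter.Tendsto (fun k : ℕ => A * (1 / ((k:ℝ) + 1))) Filter.atTop (nhds 0) := by
    simpa using tendsto_one_div_add_atTop_nhds_zero_nat.const_mul A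
  have h2 : Filter.Tendsto (fun k => c k ^ 2) Filter.atTop (nhds 0) := by
    refine squeeze_zero (fun k => sq_nonneg _) (fun k => ?_) h1
    rw [mul_one_div, le_div_iff₀ (by positivity)]
    exact h k
  have h3 := h2.sqrt
  simp only [Real.sqrt_zero] at h3
  refine h3.congr fun k => Real.sqrt_sq (h0 k)

noncomputable def B1 (n k : ℕ) : ℝ :=
  (-1/8) ^ n * (1/4) ^ k * (n.factorial : ℝ) ^ 2 * ((2*k+n).factorial : ℝ) / (pp n * pp (n+k) ^ 2)

lemma B1_n (n k : ℕ) : B1 (n+1) k * ((n + 3/2) * (n+k+3/2)^2)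
    = B1 n k * (-1/8 * (n+1)^2 * (2*k+n+1)) := by
  have e1 : n + 1 + k = (n + k) + 1 := by ring
  have e2 : 2*k+(n+1) = (2*k+n)+1 := by ring
  unfold B1
  rw [e1, e2, pp_succ, pp_succ, Nat.factorial_succ, Nat.factorial_succ]
  have := (pp_pos n).ne'
  have := (pp_pos (n+k)).ne'
  have : (3/2 + n : ℝ) ≠ 0 := by positivity
  have : (3/2 + (n + k : ℕ) : ℝ) ≠ 0 := by positivity
  push_cast at *
  field_simp
  ring

lemma B1_k (n k : ℕ) : B1 n (k+1) * ((n+k+3/2)^2)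
    = B1 n k * (1/4 * (2*k+n+1) * (2*k+n+2)) := by
  have e1 : n + (k + 1) = (n + k) + 1 := by ring
  have e2 : 2*(k+1)+n = (2*k+n)+1+1 := by ring
  unfold B1
  rw [e1, e2, pp_succ, Nat.factorial_succ, Nat.factorial_succ]
  have := (pp_pos n).ne'
  have := (pp_pos (n+k)).ne'
  have : (3/2 + (n + k : ℕ) : ℝ) ≠ 0 := by positivity
  push_cast at *
  field_simp
  ring

noncomputable def F1 (n k : ℕ) : ℝ := B1 n k * (2*n+1)
noncomputable def G1 (n k : ℕ) : ℝ := B1 n k * (3*n+2*k+2)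

lemma wz1 (n k : ℕ) : F1 (n+1) k - F1 n k = G1 n (k+1) - G1 n k := by
  unfold F1 G1
  have h1 := B1_n n k
  have h2 := B1_k n k
  have p1 : (n + 3/2 : ℝ) ≠ 0 := by positivity
  have p2 : (n + k + 3/2 : ℝ) ≠ 0 := by positivity
  rw [← eq_div_iff (by positivity)] at h1 h2
  rw [h1, h2]
  push_cast
  field_simp
  ring

lemma B1_00 : B1 0 0 = 1 := by simp [B1, pp_zero]

lemma B1_0k_pos (k : ℕ) : 0 < B1 0 k := by
  have := pp_pos 0
  have := pp_pos (0+k)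
  unfold B1; positivity

lemma G1_0_nonneg (k : ℕ) : 0 ≤ G1 0 k := by
  have := B1_0k_pos k
  unfold G1; positivity

lemma G1_bound (n k : ℕ) : |G1 n k| ≤ G1 0 k * (5/8) ^ n := by
  induction n with
  | zero => simp [abs_of_nonneg (G1_0_nonneg k)]
  | succ n ih =>
    have h1 := B1_n n k
    rw [← eq_div_iff (by positivity)] at h1
    have : |G1 (n+1) k| ≤ 5/8 * |G1 n k| := by
      unfold G1
      rw [h1, abs_mul, abs_div, abs_mul (B1 n k), abs_mul (B1 n k)]
      rw [abs_of_nonneg (show (0:ℝ) ≤ 3*n+2*k+2 by positivity),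
        abs_of_nonneg (show (0:ℝ) ≤ 3*(n+1 : ℕ)+2*k+2 by positivity),
        abs_of_nonneg (show (0:ℝ) ≤ (n + 3/2) * (n+k+3/2)^2 by positivity),
        show |(-1/8 * (n+1)^2 * (2*k+n+1) : ℝ)| = 1/8 * (n+1)^2 * (2*k+n+1) by
          rw [abs_mul, abs_mul, abs_of_nonneg (show (0:ℝ) ≤ 2*k+n+1 by positivity),
            abs_of_nonneg (show (0:ℝ) ≤ (n+1)^2 by positivity)]; norm_num]
      have hA : (1/8 * (n+1)^2 * (2*k+n+1) : ℝ) ≤ 1/4 * ((n + 3/2) * (n+k+3/2)^2) := by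
        have a1 : ((n:ℝ)+1) ≤ n + 3/2 := by linarith
        have a2 : ((n:ℝ)+1) ≤ n + k + 3/2 := by linarith [(Nat.cast_nonneg k : (0:ℝ) ≤ k)]
        have a3 : (2*k+n+1:ℝ) ≤ 2 * (n + k + 3/2) := by
          linarith [(Nat.cast_nonneg n : (0:ℝ) ≤ n)]
        calc (1/8 * (n+1)^2 * (2*k+n+1) : ℝ) = 1/8 * ((n+1)*(n+1)*(2*k+n+1)) := by ring
          _ ≤ 1/8 * ((n + 3/2) * (n+k+3/2) * (2 * (n + k + 3/2))) := by gcongr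
          _ = _ := by ring
      have hB : (3*(n+1 : ℕ)+2*k+2 : ℝ) ≤ 5/2 * (3*n+2*k+2) := by
        push_cast
        linarith [(Nat.cast_nonneg n : (0:ℝ) ≤ n), (Nat.cast_nonneg k : (0:ℝ) ≤ k)]
      have hB0 := abs_nonneg (B1 n k)
      rw [div_mul_eq_mul_div, div_le_iff₀ (by positivity)]
      calc |B1 n k| * (1/8 * (n+1)^2 * (2*k+n+1)) * (3*(n+1 : ℕ)+2*k+2)
          ≤ |B1 n k| * (1/4 * ((n + 3/2) * (n+k+3/2)^2)) * (5/2 * (3*n+2*k+2)) := by gcongr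
        _ = _ := by ring
    calc |G1 (n+1) k| ≤ 5/8 * |G1 n k| := this
      _ ≤ 5/8 * (G1 0 k * (5/8) ^ n) := by gcongr
      _ = _ := by ring

lemma G1_lim : Filter.Tendsto (fun k => G1 0 k) Filter.atTop (nhds 0) := by
  refine lim_of_sq _ 4 G1_0_nonneg fun k => ?_
  induction k with
  | zero => simp [G1, B1_00]; norm_num
  | succ k ih =>
    refine le_trans ?_ ih
    have h2 := B1_k 0 k
    rw [← eq_div_iff (by positivity)] at h2
    unfold G1
    rw [h2]
    have e : (B1 0 k * (1/4 * (2*k+(0:ℕ)+1) * (2*k+(0:ℕ)+2)) / (((0:ℕ):ℝ)+k+3/2)^2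
        * (3*(0:ℕ)+2*(k+1:ℕ)+2)) ^ 2 * ((k+1:ℕ)+1)
        = B1 0 k ^ 2 * (((2*k+1)*(k+1)*(k+2))^2*(k+2)/ (k+3/2)^4) := by
      push_cast; field_simp; ring
    rw [e]
    have e' : (B1 0 k * (3*(0:ℕ)+2*k+2)) ^ 2 * (k+1) = B1 0 k ^ 2 * (4*(k+1)^3) := by
      push_cast; ring
    rw [e']
    gcongr
    rw [div_le_iff₀ (by positivity), ← sub_nonneg]
    ring_nf
    positivity

lemma lim1 : Filter.Tendsto (fun K => ∑ k ∈ Finset.range K, F1 0 k) Filter.atTop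
      (nhds (∑' n, G1 n 0)) := by
  refine wz_aux F1 G1 (fun k => G1 0 k) (fun n => (5/8)^n) wz1 G1_bound ?_
    (summable_geometric_of_lt_one (by norm_num) (by norm_num)) G1_lim
  intro n k
  unfold F1 G1
  rw [abs_mul, abs_mul]
  refine mul_le_mul_of_nonneg_left ?_ (abs_nonneg _)
  rw [abs_of_nonneg (by positivity), abs_of_nonneg (by positivity)]
  linarith [(Nat.cast_nonneg n : (0:ℝ) ≤ n), (Nat.cast_nonneg k : (0:ℝ) ≤ k)]

noncomputable def B2 (n k : ℕ) : ℝ :=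
  (-1) ^ n * (k.factorial : ℝ) * pp n / ((2*n+1)^2 * (2*(n+k)+1) * pp (n+k))
noncomputable def F2 (n k : ℕ) : ℝ := B2 n k * (n+1/2)
noncomputable def G2 (n k : ℕ) : ℝ := B2 n k * (2*n+k+1)

lemma wz2 (n k : ℕ) : F2 (n+1) k - F2 n k = G2 n (k+1) - G2 n k := by
  have e1 : n + 1 + k = (n + k) + 1 := by ring
  have e2 : n + (k + 1) = (n + k) + 1 := by ring
  unfold F2 G2 B2
  rw [e1, e2, pp_succ, pp_succ, Nat.factorial_succ]
  have := (pp_pos n).ne'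
  have := (pp_pos (n+k)).ne'
  have : (3/2 + n : ℝ) ≠ 0 := by positivity
  have : (3/2 + (n + k) : ℝ) ≠ 0 := by positivity
  have : (2*n+1 : ℝ) ≠ 0 := by positivity
  have : (2*(n+1)+1 : ℝ) ≠ 0 := by positivity
  have : (2*(n+k)+1 : ℝ) ≠ 0 := by positivity
  have : (2*(n+1+k)+1 : ℝ) ≠ 0 := by positivity
  have : (2*(n+(k+1))+1 : ℝ) ≠ 0 := by positivity
  push_cast at *
  field_simp
  ring

lemma pp_mul (n k : ℕ) : pp n * pp k ≤ pp (n+k) := by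
  induction k with
  | zero => simp [pp_zero]
  | succ k ih =>
    rw [← add_assoc, pp_succ, pp_succ, ← mul_assoc]
    have := pp_pos (n+k)
    gcongr
    omega

noncomputable def cc (k : ℕ) : ℝ := k.factorial / pp k

lemma cc_nonneg (k : ℕ) : 0 ≤ cc k := by
  have := pp_pos k
  unfold cc; positivity

lemma cc_lim : Filter.Tendsto cc Filter.atTop (nhds 0) := by
  refine lim_of_sq _ 1 cc_nonneg fun k => ?_
  induction k with
  | zero => simp [cc, pp_zero]
  | succ k ih =>
    refine le_trans ?_ ih
    have := (pp_pos k).ne'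
    have e : cc (k+1) ^ 2 * ((k+1:ℕ)+1) = cc k ^ 2 * ((k+1)^2 * (k+2) / (3/2+k)^2) := by
      unfold cc
      rw [pp_succ, Nat.factorial_succ]
      push_cast; field_simp; ring
    rw [e]
    gcongr
    rw [div_le_iff₀ (by positivity), ← sub_nonneg]
    ring_nf
    positivity

lemma G2_bound (n k : ℕ) : |G2 n k| ≤ cc k * (1 / (2*n+1)^2) := by
  have h1 := pp_pos n
  have h2 := pp_pos k
  have h3 := pp_pos (n+k)
  have h4 := pp_mul n k
  have e : |G2 n k| = (k.factorial : ℝ) * pp n * (2*n+k+1)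
      / ((2*n+1)^2 * (2*(n+k)+1) * pp (n+k)) := by
    unfold G2 B2
    rw [abs_mul, abs_div, abs_mul, abs_mul, abs_pow, abs_neg, abs_one, one_pow, one_mul,
      abs_of_nonneg (show (0:ℝ) ≤ k.factorial by positivity), abs_of_pos h1,
      abs_of_nonneg (show (0:ℝ) ≤ 2*n+k+1 by positivity),
      abs_of_nonneg (show (0:ℝ) ≤ (2*n+1)^2 * (2*(n+k)+1) * pp (n+k) by positivity)]
    ring
  rw [e, cc, div_mul_div_comm, div_le_div_iff₀ (by positivity) (by positivity)]
  have h5 : (2*n+k+1 : ℝ) ≤ 2*(n+k)+1 := by linarith [(Nat.cast_nonneg k : (0:ℝ) ≤ k)]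
  calc (k.factorial : ℝ) * pp n * (2*n+k+1) * (pp k * (2*n+1)^2)
      = (k.factorial : ℝ) * (pp n * pp k) * (2*n+k+1) * (2*n+1)^2 := by ring
    _ ≤ (k.factorial : ℝ) * pp (n+k) * (2*(n+k)+1) * (2*n+1)^2 := by gcongr
    _ = _ := by ring

lemma summ_b : Summable (fun n : ℕ => 1 / (2*(n:ℝ)+1)^2) := by
  have h : Summable (fun n : ℕ => 1 / (n:ℝ)^2) := Real.summable_one_div_nat_pow.2 (by norm_num)
  have h' := (summable_nat_add_iff 1).2 h
  refine Summable.of_nonneg_of_le (fun n => by positivity) (fun n => ?_) h'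
  push_cast
  gcongr
  linarith [(Nat.cast_nonneg n : (0:ℝ) ≤ n)]

lemma lim2 : Filter.Tendsto (fun K => ∑ k ∈ Finset.range K, F2 0 k) Filter.atTop
      (nhds (∑' n, G2 n 0)) := by
  refine wz_aux F2 G2 cc _ wz2 G2_bound ?_ summ_b cc_lim
  intro n k
  unfold F2 G2
  rw [abs_mul, abs_mul]
  refine mul_le_mul_of_nonneg_left ?_ (abs_nonneg _)
  rw [abs_of_nonneg (by positivity), abs_of_nonneg (by positivity)]
  linarith [(Nat.cast_nonneg n : (0:ℝ) ≤ n), (Nat.cast_nonneg k : (0:ℝ) ≤ k)]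

lemma F_eq (k : ℕ) : F1 0 k = 2 * F2 0 k := by
  induction k with
  | zero => simp [F1, F2, B2, B1_00, pp_zero]
  | succ k ih =>
    have h2 := B1_k 0 k
    rw [← eq_div_iff (by positivity)] at h2
    have a : F1 0 (k+1) = F1 0 k * ((k+1/2)*(k+1)/(k+3/2)^2) := by
      unfold F1; rw [h2]; push_cast; field_simp; ring
    have b : F2 0 (k+1) = F2 0 k * ((k+1/2)*(k+1)/(k+3/2)^2) := by
      unfold F2 B2
      have := (pp_pos k).ne'
      have : (3/2 + k : ℝ) ≠ 0 := by positivity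
      have : (2*(k+1) + 1 : ℝ) ≠ 0 := by positivity
      rw [zero_add, zero_add, pp_succ, Nat.factorial_succ]
      push_cast; field_simp; ring
    rw [a, b, ih]; ring

theorem stmt_8 :
    ∑' n : ℕ, (-1 : ℝ) ^ n *
        ((ascPochhammer ℝ n).eval (1 : ℝ)) ^ 3 / ((ascPochhammer ℝ n).eval (3 / 2 : ℝ)) ^ 3 *
        ((2 + 3 * (n : ℝ)) / (8 : ℝ) ^ n) =
      2 * catalanConst := by
  have h1 : ∀ n : ℕ, (-1 : ℝ) ^ n *
        ((ascPochhammer ℝ n).eval (1 : ℝ)) ^ 3 / ((ascPochhammer ℝ n).eval (3 / 2 : ℝ)) ^ 3 *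
        ((2 + 3 * (n : ℝ)) / (8 : ℝ) ^ n) = G1 n 0 := by
    intro n
    have := (pp_pos n).ne'
    rw [ascPochhammer_eval_one]
    change _ / pp n ^ 3 * _ = _
    unfold G1 B1
    rw [div_pow]
    simp only [mul_zero, zero_add, add_zero, pow_zero, Nat.cast_zero]
    field_simp
    ring
  have h2 : ∀ n : ℕ, (-1 : ℝ) ^ n / (2 * (n : ℝ) + 1) ^ 2 = G2 n 0 := by
    intro n
    have := (pp_pos n).ne'
    have : (2*n+1 : ℝ) ≠ 0 := by positivity
    unfold G2 B2
    simp only [add_zero, Nat.cast_zero, Nat.factorial_zero, Nat.cast_one]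
    field_simp
  unfold catalanConst
  rw [tsum_congr h1, tsum_congr h2]
  refine tendsto_nhds_unique lim1 ?_
  simp_rw [F_eq, ← Finset.mul_sum]
  exact lim2.const_mul 2
end
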